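/- Let n ≥ 1 and let Z ⊆ ℂ^n be a nonempty irreducible Zariski closed subset defined over ℚ̄ such that exp(Z) ⊆ (ℂ^*)^n is also an irreducible Zariski closed subset defined over ℚ̄. Then exp(Z) is a torsion translate of a subtorus of (ℂ^*)^n. -/

import Mathlib

open MvPolynomial

noncomputable section

/-- The coordinatewise exponential map `ℂ^n → (ℂ^*)^n`,
`z ↦ (e^{2π√-1 z_λ})_λ`. -/
def expMap (n : ℕ) (z : Fin n → ℂ) : Fin n → ℂ :=
  fun i => Complex.exp (2 * (Real.pi : ℂ) * Complex.I * z i)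

/-- A subset of `ℂ^n` is Zariski closed if it is the common zero locus of a family
of polynomials with complex coefficients. -/
def ZClosed (n : ℕ) (S : Set (Fin n → ℂ)) : Prop :=
  ∃ P : Set (MvPolynomial (Fin n) ℂ), S = {z | ∀ p ∈ P, eval z p = 0}

/-- Zariski closed and defined over `ℚ̄`: the common zero locus of a family of
polynomials whose coefficients are algebraic over `ℚ`. -/
def ZClosedQbar (n : ℕ) (S : Set (Fin n → ℂ)) : Prop :=
  ∃ P : Set (MvPolynomial (Fin n) ℂ),
    (∀ p ∈ P, ∀ m, IsAlgebraic ℚ (coeff m p)) ∧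
    S = {z | ∀ p ∈ P, eval z p = 0}

/-- A subset of `(ℂ^*)^n` (viewed as the set of points of `ℂ^n` with all coordinates
nonzero) is Zariski closed if it is the common zero locus in `(ℂ^*)^n` of a family of
polynomials. -/
def ZClosedTorus (n : ℕ) (T : Set (Fin n → ℂ)) : Prop :=
  ∃ P : Set (MvPolynomial (Fin n) ℂ),
    T = {z | (∀ i, z i ≠ 0) ∧ ∀ p ∈ P, eval z p = 0}

/-- Zariski closed in `(ℂ^*)^n` and defined over `ℚ̄`. -/
def ZClosedTorusQbar (n : ℕ) (T : Set (Fin n → ℂ)) : Prop :=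
  ∃ P : Set (MvPolynomial (Fin n) ℂ),
    (∀ p ∈ P, ∀ m, IsAlgebraic ℚ (coeff m p)) ∧
    T = {z | (∀ i, z i ≠ 0) ∧ ∀ p ∈ P, eval z p = 0}

/-- A set is irreducible (with respect to a given notion of closed set) if it is
nonempty and not the union of two proper closed subsets of it. -/
def IsIrrOf {α : Type*} (Closed : Set α → Prop) (S : Set α) : Prop :=
  S.Nonempty ∧ ∀ F G : Set α, Closed F → Closed G → S ⊆ F ∪ G → S ⊆ F ∨ S ⊆ G

/-- A subtorus of `(ℂ^*)^n`: the image of a homomorphism `(ℂ^*)^m → (ℂ^*)^n`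
given by an integer matrix, `x ↦ (∏_j x_j ^ a_{λ j})_λ`. -/
def IsSubtorus (n : ℕ) (T₀ : Set (Fin n → ℂ)) : Prop :=
  ∃ (m : ℕ) (a : Fin n → Fin m → ℤ),
    T₀ = {z | ∃ x : Fin m → ℂ, (∀ j, x j ≠ 0) ∧ ∀ l, z l = ∏ j, x j ^ a l j}

/-- A torsion point of `(ℂ^*)^n`: every coordinate is a root of unity. -/
def IsTorsionPoint (n : ℕ) (τ : Fin n → ℂ) : Prop :=
  ∀ i, ∃ k : ℕ, 0 < k ∧ τ i ^ k = 1

/-- A torsion translate of a subtorus: a coset `τ · T₀` with `τ` a torsion point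
and `T₀` a subtorus. -/
def IsTorsionTranslateOfSubtorus (n : ℕ) (T : Set (Fin n → ℂ)) : Prop :=
  ∃ (τ : Fin n → ℂ) (T₀ : Set (Fin n → ℂ)),
    IsTorsionPoint n τ ∧ IsSubtorus n T₀ ∧
    T = (fun z => fun i => τ i * z i) '' T₀


theorem gs_siegel (K : Type) [Field K] [NumberField K] : ∃ C : ℝ, ∀ (α β : Type) [Fintype α] [Fintype β]
   (a : Matrix α β (NumberField.RingOfIntegers K)) (A : ℝ) (p : ℕ), a ≠ 0 → 0 < p → Fintype.card α = p →
    Fintype.card β = 2 * p → (∀ k l, NumberField.house ((a k l : NumberField.RingOfIntegers K) : K) ≤ A) →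
    ∃ ξ : β → NumberField.RingOfIntegers K, ξ ≠ 0 ∧ a.mulVec ξ = 0 ∧
      ∀ l, NumberField.house (ξ l : K) ≤ C * (C * (2 * p : ℕ) * A) := by
  classical
  refine ⟨?_, fun α β _ _ a A p ha hp h1 h2 h3 => ?_⟩
  rotate_left
  · obtain ⟨ξ, h, h', h''⟩ := NumberField.house.exists_ne_zero_int_vec_house_le K a ha hp (by omega : p < 2 * p) h2 h3 h1
    refine ⟨ξ, h, h', fun l => ?_⟩
    have h4 := h'' l
    have : (p : ℝ) / ((2 * p : ℕ) - p) = 1 := by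
      have : (p : ℝ) ≠ 0 := by positivity
      push_cast
      field_simp
      ring
    rw [this, Real.rpow_one] at h4
    exact h4

theorem gs_factor (f : ℂ → ℂ) (hf : Differentiable ℂ f) (s : Finset ℂ) (hs : ∀ a ∈ s, f a = 0) :
    ∃ g : ℂ → ℂ, Differentiable ℂ g ∧ ∀ z, f z = (∏ a ∈ s, (z - a)) * g z := by
  classical
  induction s using Finset.induction_on with
  | empty => exact ⟨f, hf, by simp⟩
  | insert a s ha ih =>
    obtain ⟨g, hg, hfg⟩ := ih (fun b hb => hs b (Finset.mem_insert_of_mem hb))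
    refine ⟨dslope g a, ?_, fun z => ?_⟩
    · have := (Complex.differentiableOn_dslope (f := g) (c := a) (s := Set.univ) Filter.univ_mem).2
        hg.differentiableOn
      exact differentiableOn_univ.1 this
    · have h0 : g a = 0 := by
        have h1 := hs a (Finset.mem_insert_self _ _)
        rw [hfg, mul_eq_zero] at h1
        refine h1.resolve_left (Finset.prod_ne_zero_iff.2 fun b hb => sub_ne_zero.2 ?_)
        rintro rfl; exact ha hb
      have h2 := sub_smul_dslope g a z
      rw [h0, sub_zero, smul_eq_mul] at h2
      rw [Finset.prod_insert ha, hfg, ← h2]; ring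

theorem gs_schwarz (f : ℂ → ℂ) (hf : Differentiable ℂ f) (s : Finset ℂ) (hs : ∀ a ∈ s, f a = 0)
    (r : ℝ) (hr : 0 < r) (hsr : ∀ a ∈ s, ‖a‖ ≤ r) (B : ℝ) (hB : ∀ z : ℂ, ‖z‖ = 5 * r → ‖f z‖ ≤ B)
    (w : ℂ) (hw : ‖w‖ ≤ r) : ‖f w‖ ≤ B * (1 / 2) ^ s.card := by
  obtain ⟨g, hg, hfg⟩ := gs_factor f hf s hs
  have hB0 : 0 ≤ B := (norm_nonneg _).trans (hB (5 * r : ℝ) (by simp; positivity))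
  have h1 : ‖g w‖ ≤ B / (4 * r) ^ s.card := by
    refine Complex.norm_le_of_forall_mem_frontier_norm_le (U := Metric.ball 0 (5 * r)) Metric.isBounded_ball
      hg.diffContOnCl ?_ ?_
    · intro z hz
      rw [frontier_ball _ (by positivity), mem_sphere_zero_iff_norm] at hz
      rw [le_div_iff₀ (by positivity)]
      refine le_trans ?_ (hB z hz)
      rw [hfg, norm_mul, mul_comm]
      gcongr
      rw [norm_prod]
      rw [← Finset.prod_const]
      refine Finset.prod_le_prod (fun _ _ => by positivity) ?_
      intro a ha
      have := norm_sub_norm_le z a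
      have := hsr a ha
      linarith
    · rw [closure_ball _ (by positivity)]
      simp; linarith
  rw [hfg, norm_mul, norm_prod]
  calc _ ≤ (2 * r) ^ s.card * (B / (4 * r) ^ s.card) := by
        gcongr
        rw [← Finset.prod_const]
        refine Finset.prod_le_prod (fun _ _ => norm_nonneg _) ?_
        intro a ha
        have := norm_sub_le w a
        have := hsr a ha
        linarith
    _ = B * (1 / 2) ^ s.card := by
        rw [show (4 * r) = 2 * (2 * r) by ring, mul_pow 2 (2 * r)]
        rw [one_div, inv_pow]
        field_simp

theorem poly_two_zero (P : Polynomial (Polynomial ℂ))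
    (h : {y : ℂ | {x : ℂ | (P.map (Polynomial.evalRingHom x)).eval y = 0}.Infinite}.Infinite) : P = 0 := by
  have key : ∀ y x : ℂ, (P.map (Polynomial.evalRingHom x)).eval y = (P.eval (Polynomial.C y)).eval x := by
    intro y x
    rw [Polynomial.eval_map, Polynomial.eval₂_evalRingHom]
  by_contra hP
  apply h
  have hsub : {y : ℂ | {x : ℂ | (P.map (Polynomial.evalRingHom x)).eval y = 0}.Infinite} ⊆
      {y | P.IsRoot (Polynomial.C y)} := by
    intro y hy
    refine Polynomial.eq_zero_of_infinite_isRoot _ (hy.mono ?_)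
    intro x hx
    simpa [key] using hx
  refine Set.Finite.subset ?_ hsub
  exact (Polynomial.finite_setOfPred_isRoot hP).preimage (Polynomial.C_injective.injOn)

theorem gs_integral {K : Type} [Field K] [NumberField K] (a b : K) (T : ℕ)
    (ha : IsIntegral ℤ ((T : K) * a)) (hb : IsIntegral ℤ ((T : K) * b)) (x y i j E1 E2 : ℕ)
    (hi : i ≤ E1) (hj : j ≤ E2) :
    IsIntegral ℤ ((T : K) ^ (E1 + E2) * (((x : K) + y * b) ^ i * a ^ j)) := by
  obtain ⟨u, rfl⟩ := Nat.exists_eq_add_of_le hi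
  obtain ⟨v, rfl⟩ := Nat.exists_eq_add_of_le hj
  have : (T : K) ^ (i + u + (j + v)) * (((x : K) + y * b) ^ i * a ^ j) =
      (T : K) ^ (u + v) * (((T : K) * x + y * ((T : K) * b)) ^ i * ((T : K) * a) ^ j) := by
    rw [mul_pow (T : K) a, show (T : K) * x + y * ((T : K) * b) = T * (x + y * b) by ring, mul_pow (T : K)]
    ring
  rw [this]
  have hn : ∀ m : ℕ, IsIntegral ℤ (m : K) := fun m => by
    have := isIntegral_algebraMap (R := ℤ) (A := K) (x := (m : ℤ))
    simpa using this
  exact ((hn T).pow _).mul (((((hn T).mul (hn x)).add ((hn y).mul hb)).pow _).mul (ha.pow _))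

theorem gs_house {K : Type} [Field K] [NumberField K] (a b : K) (c : ℝ) (hc : 1 ≤ c)
    (ha : NumberField.house a ≤ c) (hb : 1 + NumberField.house b ≤ c) (x y i j M E1 E2 : ℕ)
    (hM : 1 ≤ M) (hx : x ≤ M) (hy : y ≤ M)
    (hi : i ≤ E1) (hj : j ≤ E2) :
    NumberField.house (((x : K) + y * b) ^ i * a ^ j) ≤ (c * M) ^ E1 * c ^ E2 := by
  have hM' : (1 : ℝ) ≤ M := by exact_mod_cast hM
  have hcM : 1 ≤ c * M := by nlinarith
  have hx' : (x : ℝ) ≤ M := by exact_mod_cast hx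
  have hy' : (y : ℝ) ≤ M := by exact_mod_cast hy
  have hbn := NumberField.house_nonneg b
  have h1 : NumberField.house ((x : K) + y * b) ≤ c * M := by
    refine (NumberField.house_add_le _ _).trans ?_
    rw [NumberField.house_nat_mul]
    have : NumberField.house (x : K) = x := by
      have := NumberField.house_intCast (K := K) (x : ℤ)
      simpa using this
    rw [this]
    have : (y : ℝ) * NumberField.house b ≤ M * NumberField.house b := by gcongr
    nlinarith
  refine (NumberField.house_mul_le _ _).trans ?_
  have h2 : NumberField.house (((x : K) + y * b) ^ i) ≤ (c * M) ^ E1 :=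
    (NumberField.house_pow_le _ _).trans
      ((pow_le_pow_left₀ (NumberField.house_nonneg _) h1 _).trans (pow_le_pow_right₀ hcM hi))
  have h3 : NumberField.house (a ^ j) ≤ c ^ E2 :=
    (NumberField.house_pow_le _ _).trans
      ((pow_le_pow_left₀ (NumberField.house_nonneg _) ha _).trans (pow_le_pow_right₀ hc hj))
  have := NumberField.house_nonneg (a ^ j)
  gcongr

theorem gs_choose (G : ℝ) (D : ℕ) : ∃ N : ℕ, 1 ≤ N ∧ ∀ M : ℕ, N ^ 2 ≤ M → G ≤ M ∧
    (M : ℝ) ^ (D * N) < 2 ^ M := by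
  have h1 : ∀ᶠ x : ℝ in Filter.atTop, (D + 1 : ℝ) * Real.log x < Real.log 2 * x ^ (1 / 2 : ℝ) := by
    have h := (isLittleO_log_rpow_atTop (r := 1 / 2) (by norm_num)).def
      (c := Real.log 2 / (D + 1) / 2) (by have := Real.log_pos one_lt_two; positivity)
    filter_upwards [h, Filter.eventually_gt_atTop 1] with x hx hx1
    have hl := Real.log_pos hx1
    have hp : 0 < x ^ (1 / 2 : ℝ) := by positivity
    rw [Real.norm_of_nonneg hl.le, Real.norm_of_nonneg hp.le] at hx
    have hl2 := Real.log_pos one_lt_two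
    calc (D + 1 : ℝ) * Real.log x ≤ (D + 1) * (Real.log 2 / (D + 1) / 2 * x ^ (1 / 2 : ℝ)) := by gcongr
      _ = Real.log 2 * x ^ (1 / 2 : ℝ) / 2 := by field_simp
      _ < _ := by
        have : 0 < Real.log 2 * x ^ (1 / 2 : ℝ) := by positivity
        linarith
  obtain ⟨B, hB⟩ := Filter.eventually_atTop.1 h1
  obtain ⟨N, hN⟩ := exists_nat_ge (max (max G B) 2)
  refine ⟨N, ?_, fun M hM => ?_⟩
  · have : (2 : ℝ) ≤ N := le_trans (le_max_right _ _) hN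
    have : 2 ≤ N := by exact_mod_cast this
    omega
  have hN2 : (2 : ℝ) ≤ N := le_trans (le_max_right _ _) hN
  have hMN : (N : ℝ) ^ 2 ≤ M := by exact_mod_cast hM
  have hNM : (N : ℝ) ≤ M := by nlinarith
  have hG : G ≤ N := le_trans (le_trans (le_max_left _ _) (le_max_left _ _)) hN
  have hBN : B ≤ N := le_trans (le_trans (le_max_right _ _) (le_max_left _ _)) hN
  refine ⟨hG.trans hNM, ?_⟩
  have hMpos : (0 : ℝ) < M := by linarith
  have h2 := hB M (hBN.trans hNM)
  have hs : (N : ℝ) ≤ Real.sqrt M := Real.le_sqrt_of_sq_le hMN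
  rw [← Real.sqrt_eq_rpow] at h2
  have hlog : 0 < Real.log M := Real.log_pos (by linarith)
  rw [← Real.log_lt_log_iff (by positivity) (by positivity), Real.log_pow, Real.log_pow]
  push_cast
  calc (D : ℝ) * N * Real.log M ≤ ((D + 1) * Real.log M) * N := by nlinarith
    _ < (Real.log 2 * √M) * N := by gcongr; 
    _ ≤ Real.log 2 * √M * √M := by
        have := Real.log_pos one_lt_two
        gcongr
    _ = M * Real.log 2 := by rw [mul_assoc, Real.mul_self_sqrt hMpos.le]; ring

theorem gs_step {K : Type} [Field K] [NumberField K] (σ : K →+* ℂ) (a b : K)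
    (hab : σ a = Complex.exp (2 * (Real.pi : ℂ) * Complex.I * σ b))
    (hirr : ∀ q : ℚ, σ b ≠ q) (T : ℕ) (hT : 1 ≤ T)
    (ha : IsIntegral ℤ ((T : K) * a)) (hb : IsIntegral ℤ ((T : K) * b))
    (c : ℝ) (hc : 1 ≤ c)
    (hac : NumberField.house a ≤ c) (hbc : 1 + NumberField.house b ≤ c)
    (N : ℕ) (hN : 1 ≤ N) (ξ : Fin (2 * N ^ 3) × Fin N → NumberField.RingOfIntegers K)
    (X : ℝ) (hξ : ∀ l, NumberField.house (ξ l : K) ≤ X) (M : ℕ) (hNM : N ^ 2 ≤ M)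
    (hM2 : 2 ≤ M) (hTM : T ≤ M) (hcM : 5 * c ≤ M) (heM : Real.exp (10 * Real.pi * c) ≤ M)
    (hXM : X ≤ (M : ℝ) ^ (15 * N ^ 3))
    (hfin : (M : ℝ) ^ (26 * Module.finrank ℚ K * N) < 2 ^ M)
    (hV : ∀ x y : ℕ, x < M → y < M →
      ∑ l : Fin (2 * N ^ 3) × Fin N, (ξ l : K) * (((x : K) + y * b) ^ (l.1 : ℕ) * a ^ (y * l.2)) = 0)
    (x y : ℕ) (hx : x ≤ M) (hy : y ≤ M) :
    ∑ l : Fin (2 * N ^ 3) × Fin N, (ξ l : K) * (((x : K) + y * b) ^ (l.1 : ℕ) * a ^ (y * l.2)) = 0 := by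
  classical
  set V : ℕ → ℕ → K := fun x y =>
    ∑ l : Fin (2 * N ^ 3) × Fin N, (ξ l : K) * (((x : K) + y * b) ^ (l.1 : ℕ) * a ^ (y * l.2)) with hVdef
  have hM1 : 1 ≤ M := by omega
  have hMr1 : (1 : ℝ) ≤ M := by exact_mod_cast hM1
  have hN3 : N ^ 3 ≤ N * M := by nlinarith [Nat.zero_le N]
  have hNM1 : 1 ≤ N * M := Nat.mul_pos hN hM1
  have hcM' : c ≤ M := by linarith
  have hX0 : 0 ≤ X := (NumberField.house_nonneg _).trans
    (hξ (⟨0, by positivity⟩, ⟨0, hN⟩))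
  have hcard : (Fintype.card (Fin (2 * N ^ 3) × Fin N) : ℝ) ≤ (M : ℝ) ^ 3 := by
    rw [Fintype.card_prod, Fintype.card_fin, Fintype.card_fin]
    have : 2 * N ^ 3 * N ≤ M ^ 3 := by
      calc 2 * N ^ 3 * N = 2 * (N ^ 2 * N ^ 2) := by ring
        _ ≤ M * (M * M) := by gcongr
        _ = M ^ 3 := by ring
    exact_mod_cast this
  set F : ℂ → ℂ := fun z => ∑ l : Fin (2 * N ^ 3) × Fin N, σ (ξ l : K) *
    (z ^ (l.1 : ℕ) * Complex.exp (2 * (Real.pi : ℂ) * Complex.I * z) ^ (l.2 : ℕ)) with hF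
  have hFd : Differentiable ℂ F := by
    rw [hF]; fun_prop
  have hFV : ∀ x y : ℕ, F (x + y * σ b) = σ (V x y) := by
    intro x y
    simp only [hF, hVdef, map_sum, map_mul, map_pow, map_add, map_natCast]
    refine Finset.sum_congr rfl fun l _ => ?_
    congr 2
    rw [pow_mul]
    congr 1
    rw [hab, ← Complex.exp_nat_mul, mul_add, Complex.exp_add]
    have : Complex.exp (2 * (Real.pi : ℂ) * Complex.I * x) = 1 := by
      rw [Complex.exp_eq_one_iff]; exact ⟨x, by push_cast; ring⟩
    rw [this, one_mul]
    congr 1; ring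
  have hptnorm : ∀ x y : ℕ, x ≤ M → y ≤ M → ‖(x : ℂ) + y * σ b‖ ≤ c * M := by
    intro x y hx hy
    have h1 := NumberField.norm_embedding_le_house b σ
    have hx' : (x : ℝ) ≤ M := by exact_mod_cast hx
    have hy' : (y : ℝ) ≤ M := by exact_mod_cast hy
    calc ‖(x : ℂ) + y * σ b‖ ≤ x + y * ‖σ b‖ := by
          refine (norm_add_le _ _).trans ?_
          simp
      _ ≤ M + M * NumberField.house b := by gcongr
      _ ≤ c * M := by nlinarith
  -- the zero set
  let s : Finset ℂ := (Finset.univ : Finset (Fin M × Fin M)).image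
    (fun t => ((t.1 : ℕ) : ℂ) + ((t.2 : ℕ) : ℂ) * σ b)
  have hscard : s.card = M ^ 2 := by
    rw [Finset.card_image_of_injective, Finset.card_univ, Fintype.card_prod, Fintype.card_fin, sq]
    rintro ⟨x1, y1⟩ ⟨x2, y2⟩ h
    simp only at h
    by_cases hyy : y1 = y2
    · subst hyy
      simp only [add_left_inj, Nat.cast_inj] at h
      rw [Fin.ext h]
    · exfalso
      have hne : ((y1 : ℕ) : ℂ) - ((y2 : ℕ) : ℂ) ≠ 0 := by
        rw [sub_ne_zero]; intro h'; exact hyy (Fin.ext (Nat.cast_injective h'))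
      apply hirr ((((x2 : ℕ) : ℚ) - ((x1 : ℕ) : ℚ)) / (((y1 : ℕ) : ℚ) - ((y2 : ℕ) : ℚ)))
      push_cast
      rw [eq_div_iff hne]
      linear_combination h
  have hFbound : ∀ z : ℂ, ‖z‖ = 5 * (c * M) → ‖F z‖ ≤ (M : ℝ) ^ (23 * (N * M)) := by
    intro z hz
    have hz1 : ‖z‖ ≤ (M : ℝ) ^ 2 := by rw [hz]; nlinarith
    have hz2 : ‖Complex.exp (2 * (Real.pi : ℂ) * Complex.I * z)‖ ≤ (M : ℝ) ^ M := by
      calc ‖Complex.exp (2 * (Real.pi : ℂ) * Complex.I * z)‖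
          ≤ Real.exp ‖2 * (Real.pi : ℂ) * Complex.I * z‖ := Complex.norm_exp_le_exp_norm _
        _ = Real.exp (10 * Real.pi * c) ^ M := by
          rw [← Real.exp_nat_mul]
          congr 1
          simp [hz, abs_of_pos Real.pi_pos]
          ring
        _ ≤ (M : ℝ) ^ M := by gcongr
    have hterm : ∀ l : Fin (2 * N ^ 3) × Fin N, ‖σ (ξ l : K) *
        (z ^ (l.1 : ℕ) * Complex.exp (2 * (Real.pi : ℂ) * Complex.I * z) ^ (l.2 : ℕ))‖ ≤
        (M : ℝ) ^ (15 * N ^ 3) * (((M : ℝ) ^ 2) ^ (2 * N ^ 3) * ((M : ℝ) ^ M) ^ N) := by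
      intro l
      rw [norm_mul, norm_mul, norm_pow, norm_pow]
      have h1 : ‖σ (ξ l : K)‖ ≤ (M : ℝ) ^ (15 * N ^ 3) :=
        (NumberField.norm_embedding_le_house _ σ).trans ((hξ l).trans hXM)
      have h2 : ‖z‖ ^ (l.1 : ℕ) ≤ ((M : ℝ) ^ 2) ^ (2 * N ^ 3) :=
        (pow_le_pow_left₀ (norm_nonneg _) hz1 _).trans
          (pow_le_pow_right₀ (one_le_pow₀ hMr1) l.1.2.le)
      have h3 : ‖Complex.exp (2 * (Real.pi : ℂ) * Complex.I * z)‖ ^ (l.2 : ℕ) ≤ ((M : ℝ) ^ M) ^ N :=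
        (pow_le_pow_left₀ (norm_nonneg _) hz2 _).trans
          (pow_le_pow_right₀ (one_le_pow₀ hMr1) l.2.2.le)
      gcongr
    calc ‖F z‖ ≤ ∑ l : Fin (2 * N ^ 3) × Fin N, 
          (M : ℝ) ^ (15 * N ^ 3) * (((M : ℝ) ^ 2) ^ (2 * N ^ 3) * ((M : ℝ) ^ M) ^ N) :=
          norm_sum_le_of_le _ (fun l _ => hterm l)
      _ = (Fintype.card (Fin (2 * N ^ 3) × Fin N) : ℝ) *
          ((M : ℝ) ^ (15 * N ^ 3) * (((M : ℝ) ^ 2) ^ (2 * N ^ 3) * ((M : ℝ) ^ M) ^ N)) := by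
          rw [Finset.sum_const, nsmul_eq_mul, Finset.card_univ]
      _ ≤ (M : ℝ) ^ 3 *
          ((M : ℝ) ^ (15 * N ^ 3) * (((M : ℝ) ^ 2) ^ (2 * N ^ 3) * ((M : ℝ) ^ M) ^ N)) := by gcongr
      _ = (M : ℝ) ^ (3 + 15 * N ^ 3 + 4 * N ^ 3 + N * M) := by
          rw [← pow_mul, ← pow_mul, ← pow_add, ← pow_add, ← pow_add]
          congr 1; ring
      _ ≤ (M : ℝ) ^ (23 * (N * M)) := by
          apply pow_le_pow_right₀ hMr1
          omega
  by_contra hne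
  set η : K := (T : K) ^ (2 * N ^ 3 + N * M) * V x y with hη
  have hT0 : (T : K) ≠ 0 := by
    have : T ≠ 0 := by omega
    exact_mod_cast this
  have hη0 : η ≠ 0 := mul_ne_zero (pow_ne_zero _ hT0) hne
  have hexp : ∀ l : Fin (2 * N ^ 3) × Fin N, y * (l.2 : ℕ) ≤ N * M := by
    intro l
    have := l.2.2
    nlinarith
  have hηint : IsIntegral ℤ η := by
    rw [hη, hVdef]
    simp only [Finset.mul_sum]
    refine IsIntegral.sum _ fun l _ => ?_
    rw [mul_left_comm]
    exact (NumberField.RingOfIntegers.isIntegral_coe (ξ l)).mul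
      (gs_integral a b T ha hb x y l.1 (y * l.2) _ _ l.1.2.le (hexp l))
  have hηhouse : NumberField.house η ≤ (M : ℝ) ^ (26 * (N * M)) := by
    have hterm : ∀ l : Fin (2 * N ^ 3) × Fin N,
        NumberField.house ((ξ l : K) * (((x : K) + y * b) ^ (l.1 : ℕ) * a ^ (y * l.2))) ≤
        (M : ℝ) ^ (15 * N ^ 3) * (((M : ℝ) ^ 2) ^ (2 * N ^ 3) * (M : ℝ) ^ (N * M)) := by
      intro l
      refine (NumberField.house_mul_le _ _).trans ?_
      have h1 := (hξ l).trans hXM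
      have h2 := gs_house a b c hc hac hbc x y l.1 (y * l.2) M _ _ hM1 hx hy l.1.2.le (hexp l)
      have h3 : (c * M) ^ (2 * N ^ 3) * c ^ (N * M) ≤
          ((M : ℝ) ^ 2) ^ (2 * N ^ 3) * (M : ℝ) ^ (N * M) := by
        have : c * M ≤ (M : ℝ) ^ 2 := by nlinarith
        gcongr
      have := h2.trans h3
      have := NumberField.house_nonneg (((x : K) + y * b) ^ (l.1 : ℕ) * a ^ (y * (l.2 : ℕ)))
      gcongr
    have hVh : NumberField.house (V x y) ≤ (M : ℝ) ^ 3 *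
        ((M : ℝ) ^ (15 * N ^ 3) * (((M : ℝ) ^ 2) ^ (2 * N ^ 3) * (M : ℝ) ^ (N * M))) := by
      rw [hVdef]
      refine (NumberField.house_sum_le_sum_house _ _).trans ?_
      refine (Finset.sum_le_sum fun l _ => hterm l).trans ?_
      rw [Finset.sum_const, nsmul_eq_mul, Finset.card_univ]
      gcongr
    have hTh : NumberField.house ((T : K) ^ (2 * N ^ 3 + N * M)) ≤ (M : ℝ) ^ (2 * N ^ 3 + N * M) := by
      refine (NumberField.house_pow_le _ _).trans ?_
      have : NumberField.house (T : K) = T := by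
        have := NumberField.house_intCast (K := K) (T : ℤ)
        simpa using this
      rw [this]
      gcongr
    rw [hη]
    refine (NumberField.house_mul_le _ _).trans ?_
    calc _ ≤ (M : ℝ) ^ (2 * N ^ 3 + N * M) * ((M : ℝ) ^ 3 *
        ((M : ℝ) ^ (15 * N ^ 3) * (((M : ℝ) ^ 2) ^ (2 * N ^ 3) * (M : ℝ) ^ (N * M)))) := by
          have := NumberField.house_nonneg (V x y)
          gcongr
      _ = (M : ℝ) ^ (2 * N ^ 3 + N * M + 3 + 15 * N ^ 3 + 4 * N ^ 3 + N * M) := by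
          rw [← pow_mul, ← pow_add, ← pow_add, ← pow_add, ← pow_add]
          congr 1; ring
      _ ≤ _ := by
          apply pow_le_pow_right₀ hMr1
          omega
  have hσ : ‖σ η‖ ≤ (M : ℝ) ^ (26 * (N * M)) * (1 / 2) ^ (M ^ 2) := by
    have h1 := gs_schwarz F hFd s (by
      intro t ht
      obtain ⟨⟨x', y'⟩, -, rfl⟩ := Finset.mem_image.1 ht
      simp only
      rw [hFV, hVdef]
      simp only
      rw [hV _ _ x'.2 y'.2, map_zero]) (c * M) (by positivity) (by
      intro t ht
      obtain ⟨⟨x', y'⟩, -, rfl⟩ := Finset.mem_image.1 ht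
      exact hptnorm _ _ x'.2.le y'.2.le) _ hFbound (x + y * σ b) (hptnorm x y hx hy)
    rw [hFV, hscard] at h1
    rw [hη, map_mul, norm_mul]
    have h2 : ‖σ ((T : K) ^ (2 * N ^ 3 + N * M))‖ ≤ (M : ℝ) ^ (3 * (N * M)) := by
      rw [map_pow, map_natCast, norm_pow, Complex.norm_natCast]
      calc (T : ℝ) ^ (2 * N ^ 3 + N * M) ≤ (M : ℝ) ^ (2 * N ^ 3 + N * M) := by gcongr
        _ ≤ _ := by
          apply pow_le_pow_right₀ hMr1
          omega
    calc _ ≤ (M : ℝ) ^ (3 * (N * M)) * ((M : ℝ) ^ (23 * (N * M)) * (1 / 2) ^ M ^ 2) := by gcongr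
      _ = _ := by rw [← mul_assoc, ← pow_add]; congr 2; ring
  have hnorm : (1 : ℝ) ≤ ‖Algebra.norm ℚ η‖ := by
    have h1 := Algebra.isIntegral_norm ℚ hηint
    obtain ⟨k, hk⟩ := IsIntegrallyClosed.isIntegral_iff.1 h1
    have hk0 : k ≠ 0 := by
      rintro rfl
      rw [map_zero] at hk
      exact (Algebra.norm_ne_zero_iff.2 hη0) hk.symm
    rw [← hk]
    have : (1 : ℝ) ≤ |(k : ℝ)| := by exact_mod_cast Int.one_le_abs hk0
    simpa [Int.norm_eq_abs] using this
  have hd : 1 ≤ Module.finrank ℚ K := Module.finrank_pos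
  have hcontra : (1 : ℝ) ≤ ((M : ℝ) ^ (26 * Module.finrank ℚ K * N)) ^ M * (1 / 2) ^ M ^ 2 := by
    refine hnorm.trans ((NumberField.norm_norm_le_norm_mul_house_pow η σ).trans ?_)
    calc _ ≤ ((M : ℝ) ^ (26 * (N * M)) * (1 / 2) ^ (M ^ 2)) *
          ((M : ℝ) ^ (26 * (N * M))) ^ (Module.finrank ℚ K - 1) := by
          have := NumberField.house_nonneg η
          gcongr
      _ = _ := by
        obtain ⟨e, he⟩ := Nat.exists_eq_add_of_le hd
        rw [he, Nat.add_sub_cancel_left]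
        rw [← pow_mul, ← pow_mul, mul_right_comm, ← pow_add]
        congr 2; ring
  have hlt : ((M : ℝ) ^ (26 * Module.finrank ℚ K * N)) ^ M < 2 ^ (M ^ 2) := by
    rw [sq, pow_mul 2]
    exact pow_lt_pow_left₀ hfin (by positivity) (by omega)
  have : ((M : ℝ) ^ (26 * Module.finrank ℚ K * N)) ^ M * (1 / 2) ^ M ^ 2 < 1 := by
    rw [one_div, inv_pow, ← div_eq_mul_inv, div_lt_one (by positivity)]
    exact hlt
  linarith

theorem gs_core {K : Type} [Field K] [NumberField K] (σ : K →+* ℂ) (a b : K)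
    (hab : σ a = Complex.exp (2 * (Real.pi : ℂ) * Complex.I * σ b))
    (hirr : ∀ q : ℚ, σ b ≠ q) : False := by
  classical
  obtain ⟨T, hT, ha, hb⟩ : ∃ T : ℕ, 1 ≤ T ∧ IsIntegral ℤ ((T : K) * a) ∧ IsIntegral ℤ ((T : K) * b) := by
    have hal : ∀ u : K, ∃ t : ℤ, t ≠ 0 ∧ IsIntegral ℤ ((t : K) * u) := by
      intro u
      have h1 : IsAlgebraic ℤ u := (IsFractionRing.isAlgebraic_iff ℤ ℚ K).2 (Algebra.IsAlgebraic.isAlgebraic u)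
      obtain ⟨t, ht, h2⟩ := h1.exists_integral_multiple
      exact ⟨t, ht, by simpa using h2⟩
    obtain ⟨t1, h1, h1'⟩ := hal a
    obtain ⟨t2, h2, h2'⟩ := hal b
    have hcast : ∀ m : ℤ, IsIntegral ℤ (m : K) := fun m => by
      simpa using isIntegral_algebraMap (R := ℤ) (A := K) (x := m)
    have hsq : (((t1 * t2).natAbs ^ 2 : ℕ) : K) = ((t1 * t2) ^ 2 : ℤ) := by
      rw [← Int.natAbs_sq (t1 * t2)]; rw [← Int.natCast_pow, Int.cast_natCast]
    refine ⟨(t1 * t2).natAbs ^ 2, ?_, ?_, ?_⟩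
    · have : (t1 * t2).natAbs ≠ 0 := by simp [h1, h2]
      exact Nat.pos_of_ne_zero (pow_ne_zero _ this)
    · rw [hsq]
      have := (hcast (t1 * t2 ^ 2)).mul h1'
      have e : (((t1 * t2) ^ 2 : ℤ) : K) * a = ((t1 * t2 ^ 2 : ℤ) : K) * ((t1 : K) * a) := by
        push_cast; ring
      rw [e]; exact this
    · rw [hsq]
      have := (hcast (t1 ^ 2 * t2)).mul h2'
      have e : (((t1 * t2) ^ 2 : ℤ) : K) * b = ((t1 ^ 2 * t2 : ℤ) : K) * ((t2 : K) * b) := by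
        push_cast; ring
      rw [e]; exact this
  set c : ℝ := 1 + NumberField.house a + NumberField.house b with hcdef
  have hna := NumberField.house_nonneg a
  have hnb := NumberField.house_nonneg b
  have hc : 1 ≤ c := by linarith
  obtain ⟨C0, hC0⟩ := gs_siegel K
  set G : ℝ := 2 + T + 5 * c + Real.exp (10 * Real.pi * c) + |C0| with hG
  obtain ⟨N, hN, hNM⟩ := gs_choose G (26 * Module.finrank ℚ K)
  have hT0 : (T : K) ≠ 0 := by
    have : T ≠ 0 := by omega
    exact_mod_cast this
  have hTr : (0 : ℝ) ≤ T := Nat.cast_nonneg _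
  have hex : 0 < Real.exp (10 * Real.pi * c) := Real.exp_pos _
  have hC0n := abs_nonneg C0
  -- facts for M = N ^ 2
  obtain ⟨hG2, -⟩ := hNM (N ^ 2) le_rfl
  set M0 : ℕ := N ^ 2 with hM0
  have hM0r : (2 : ℝ) ≤ M0 := by linarith
  have hM01 : 1 ≤ M0 := by
    have : (1 : ℝ) ≤ M0 := by linarith
    exact_mod_cast this
  have hM0r1 : (1 : ℝ) ≤ M0 := by linarith
  -- Siegel
  have hexp : ∀ (y : Fin M0) (l : Fin (2 * N ^ 3) × Fin N), (y : ℕ) * (l.2 : ℕ) ≤ N ^ 3 := by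
    intro y l
    calc (y : ℕ) * (l.2 : ℕ) ≤ M0 * N := Nat.mul_le_mul y.2.le l.2.2.le
      _ = N ^ 3 := by rw [hM0]; ring
  let mat : Matrix (Fin M0 × Fin M0) (Fin (2 * N ^ 3) × Fin N) (NumberField.RingOfIntegers K) :=
    fun k l => ⟨(T : K) ^ (2 * N ^ 3 + N ^ 3) *
      ((((k.1 : ℕ) : K) + (k.2 : ℕ) * b) ^ (l.1 : ℕ) * a ^ ((k.2 : ℕ) * l.2)),
      gs_integral a b T ha hb k.1 k.2 l.1 (k.2 * l.2) _ _ l.1.2.le (hexp k.2 l)⟩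
  have hmat : ∀ k l, ((mat k l : NumberField.RingOfIntegers K) : K) = (T : K) ^ (2 * N ^ 3 + N ^ 3) *
      ((((k.1 : ℕ) : K) + (k.2 : ℕ) * b) ^ (l.1 : ℕ) * a ^ ((k.2 : ℕ) * l.2)) := fun k l => rfl
  have hmat0 : mat ≠ 0 := by
    intro h
    have h1 := congrArg (fun u : NumberField.RingOfIntegers K => (u : K))
      (congrFun (congrFun h (⟨0, hM01⟩, ⟨0, hM01⟩)) (⟨0, by positivity⟩, ⟨0, hN⟩))
    simp only [hmat] at h1
    simp at h1
    exact hT0 (by exact_mod_cast h1.1)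
  have hmath : ∀ k l, NumberField.house ((mat k l : NumberField.RingOfIntegers K) : K) ≤
      (M0 : ℝ) ^ (8 * N ^ 3) := by
    intro k l
    rw [hmat]
    refine (NumberField.house_mul_le _ _).trans ?_
    have h1 := gs_house a b c hc (by linarith) (by linarith) k.1 k.2 l.1 (k.2 * l.2) M0 _ _ hM01
      k.1.2.le k.2.2.le l.1.2.le (hexp k.2 l)
    have h2 : NumberField.house ((T : K) ^ (2 * N ^ 3 + N ^ 3)) ≤ (M0 : ℝ) ^ (2 * N ^ 3 + N ^ 3) := by
      refine (NumberField.house_pow_le _ _).trans ?_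
      have : NumberField.house (T : K) = T := by
        have := NumberField.house_intCast (K := K) (T : ℤ)
        simpa using this
      rw [this]
      have : (T : ℝ) ≤ M0 := by linarith
      gcongr
    have h3 : (c * M0) ^ (2 * N ^ 3) * c ^ (N ^ 3) ≤
          ((M0 : ℝ) ^ 2) ^ (2 * N ^ 3) * (M0 : ℝ) ^ (N ^ 3) := by
      have hcM : c ≤ M0 := by linarith
      have : c * M0 ≤ (M0 : ℝ) ^ 2 := by nlinarith
      gcongr
    calc _ ≤ (M0 : ℝ) ^ (2 * N ^ 3 + N ^ 3) * (((M0 : ℝ) ^ 2) ^ (2 * N ^ 3) * (M0 : ℝ) ^ (N ^ 3)) := by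
          have := h1.trans h3
          have := NumberField.house_nonneg ((((k.1 : ℕ) : K) + (k.2 : ℕ) * b) ^ (l.1 : ℕ) * a ^ ((k.2 : ℕ) * (l.2 : ℕ)))
          gcongr
      _ = _ := by
          rw [← pow_mul, ← pow_add, ← pow_add]; congr 1; ring
  obtain ⟨ξ, hξ0, hξ, hξh⟩ := hC0 (Fin M0 × Fin M0) (Fin (2 * N ^ 3) × Fin N) mat _ (N ^ 4) hmat0
    (by positivity) (by simp [hM0]; ring) (by simp; ring) hmath
  have hX : ∀ l, NumberField.house (ξ l : K) ≤ (M0 : ℝ) ^ (15 * N ^ 3) := by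
    intro l
    refine (hξh l).trans ?_
    have h1 : C0 * (C0 * ((2 * N ^ 4 : ℕ) : ℝ) * (M0 : ℝ) ^ (8 * N ^ 3)) ≤
        (M0 : ℝ) * ((M0 : ℝ) * (M0 : ℝ) ^ 3 * (M0 : ℝ) ^ (8 * N ^ 3)) := by
      have hC : |C0| ≤ M0 := by linarith
      have h2 : ((2 * N ^ 4 : ℕ) : ℝ) ≤ (M0 : ℝ) ^ 3 := by
        have h3 : (N : ℝ) ^ 4 = (M0 : ℝ) ^ 2 := by rw [hM0]; push_cast; ring
        push_cast
        rw [h3]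
        nlinarith [sq_nonneg (M0 : ℝ)]
      calc C0 * (C0 * ((2 * N ^ 4 : ℕ) : ℝ) * (M0 : ℝ) ^ (8 * N ^ 3))
          = |C0| * (|C0| * ((2 * N ^ 4 : ℕ) : ℝ) * (M0 : ℝ) ^ (8 * N ^ 3)) := by
            have := abs_mul_abs_self C0
            rw [mul_assoc, mul_assoc, ← mul_assoc, ← this]; ring
        _ ≤ _ := by gcongr
    refine h1.trans ?_
    calc (M0 : ℝ) * ((M0 : ℝ) * (M0 : ℝ) ^ 3 * (M0 : ℝ) ^ (8 * N ^ 3)) = (M0 : ℝ) ^ (5 + 8 * N ^ 3) := by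
          rw [pow_add]; ring
      _ ≤ _ := by
          apply pow_le_pow_right₀ hM0r1
          have : 1 ≤ N ^ 3 := Nat.one_le_pow _ _ hN
          omega
  -- vanishing at all points
  have hall : ∀ M : ℕ, M0 ≤ M → ∀ x y : ℕ, x < M → y < M →
      ∑ l : Fin (2 * N ^ 3) × Fin N, (ξ l : K) * (((x : K) + y * b) ^ (l.1 : ℕ) * a ^ (y * l.2)) = 0 := by
    intro M hM
    induction M, hM using Nat.le_induction with
    | base =>
      intro x y hx hy
      have h1 := congrArg (fun u : NumberField.RingOfIntegers K => (u : K))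
        (congrFun hξ (⟨x, hx⟩, ⟨y, hy⟩))
      simp only [Matrix.mulVec, dotProduct, Pi.zero_apply, map_sum, map_mul, map_zero, hmat, mul_assoc] at h1
      rw [← Finset.mul_sum, mul_eq_zero] at h1
      have h2 := h1.resolve_left (pow_ne_zero _ hT0)
      rw [← h2]
      refine Finset.sum_congr rfl fun l _ => ?_
      ring
    | succ M hM ih =>
      intro x y hx hy
      obtain ⟨hGM, hfin⟩ := hNM M hM
      have hM0M : (M0 : ℝ) ≤ M := by exact_mod_cast hM
      refine gs_step σ a b hab hirr T hT ha hb c hc (by linarith) (by linarith) N hN ξ _ hX M hM ?_ ?_ ?_ ?_ ?_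
        hfin ih x y (by omega) (by omega)
      · have : (2 : ℝ) ≤ M := by linarith
        exact_mod_cast this
      · have : (T : ℝ) ≤ M := by linarith
        exact_mod_cast this
      · linarith
      · linarith
      · gcongr
  have hall' : ∀ x y : ℕ, 
      ∑ l : Fin (2 * N ^ 3) × Fin N, (ξ l : K) * (((x : K) + y * b) ^ (l.1 : ℕ) * a ^ (y * l.2)) = 0 :=
    fun x y => hall (M0 + x + y + 1) (by omega) x y (by omega) (by omega)
  -- the polynomial
  let P : Polynomial (Polynomial ℂ) := ∑ l : Fin (2 * N ^ 3) × Fin N,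
    Polynomial.monomial (l.2 : ℕ) (Polynomial.monomial (l.1 : ℕ) (σ (ξ l : K)))
  have hP : P = 0 := by
    apply poly_two_zero
    have hinj : Function.Injective (fun y : ℕ => (σ a) ^ y) := by
      have key : ∀ m k : ℕ, k ≠ 0 → (σ a) ^ m ≠ (σ a) ^ (m + k) := by
        intro m k hk h
        have ha0 : σ a ≠ 0 := by rw [hab]; exact Complex.exp_ne_zero _
        rw [pow_add] at h
        have h1 : (σ a) ^ k = 1 := by
          have := mul_left_cancel₀ (pow_ne_zero m ha0) (h.symm.trans (mul_one _).symm)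
          exact this
        rw [hab, ← Complex.exp_nat_mul, Complex.exp_eq_one_iff] at h1
        obtain ⟨t, ht⟩ := h1
        have hpi : (2 * (Real.pi : ℂ) * Complex.I) ≠ 0 := Complex.two_pi_I_ne_zero
        have hk' : (k : ℂ) ≠ 0 := by exact_mod_cast hk
        apply hirr ((t : ℚ) / (k : ℚ))
        push_cast
        rw [eq_div_iff hk']
        apply mul_left_cancel₀ hpi
        linear_combination ht
      intro m k h
      rcases lt_trichotomy m k with h' | h' | h'
      · obtain ⟨e, rfl⟩ := Nat.exists_eq_add_of_lt h'
        exact absurd h (key m (e + 1) (by omega))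
      · exact h'
      · obtain ⟨e, rfl⟩ := Nat.exists_eq_add_of_lt h'
        exact absurd h.symm (key k (e + 1) (by omega))
    refine (Set.infinite_range_of_injective hinj).mono ?_
    rintro _ ⟨y, rfl⟩
    have hinj2 : Function.Injective (fun x : ℕ => ((x : ℂ) + y * σ b)) := by
      intro x1 x2 h
      simpa using h
    refine (Set.infinite_range_of_injective hinj2).mono ?_
    rintro _ ⟨x, rfl⟩
    have h1 := congrArg σ (hall' x y)
    simp only [map_sum, map_mul, map_pow, map_add, map_natCast, map_zero] at h1
    simp only [Set.mem_ofPred_eq, P, Polynomial.map_sum, Polynomial.map_monomial,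
      Polynomial.eval_finsetSum, Polynomial.eval_monomial, Polynomial.coe_evalRingHom]
    rw [← h1]
    refine Finset.sum_congr rfl fun l _ => ?_
    rw [pow_mul]; ring
  apply hξ0
  funext l
  have h1 : (P.coeff (l.2 : ℕ)).coeff (l.1 : ℕ) = σ (ξ l : K) := by
    simp only [P, Polynomial.finsetSum_coeff, Polynomial.coeff_monomial]
    rw [Finset.sum_eq_single l]
    · simp
    · intro l' _ hl'
      split_ifs with h
      · rw [Polynomial.coeff_monomial, if_neg]
        intro h'
        exact hl' (Prod.ext (Fin.ext h') (Fin.ext h))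
      · simp
    · simp
  rw [hP] at h1
  simp only [Polynomial.coeff_zero] at h1
  have := (map_eq_zero σ).1 h1.symm
  simpa using this

/-- Special case of the Gelfond and Schneider theorem. -/
theorem gelfond_schneider_special (β : ℂ) (hβ : IsAlgebraic ℚ β)
    (hα : IsAlgebraic ℚ (Complex.exp (2 * (Real.pi : ℂ) * Complex.I * β))) : ∃ q : ℚ, β = q := by
  by_contra hne
  push Not at hne
  set α := Complex.exp (2 * (Real.pi : ℂ) * Complex.I * β) with hαdef
  let K := IntermediateField.adjoin ℚ {α, β}
  have : FiniteDimensional ℚ K := IntermediateField.finiteDimensional_adjoin (by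
    intro x hx
    rcases hx with rfl | rfl
    · exact hα.isIntegral
    · exact hβ.isIntegral)
  have : NumberField K := ⟨⟩
  exact gs_core (K := K) K.val.toRingHom
    ⟨α, IntermediateField.subset_adjoin _ _ (by simp)⟩
    ⟨β, IntermediateField.subset_adjoin _ _ (by simp)⟩ hαdef hne
open scoped TensorProduct in
theorem exists_derivation_ne_zero {k F : Type} [Field k] [CharZero k] [Field F] [Algebra k F]
    (x : F) (hx : Transcendental k x) : ∃ D : Derivation k F F, D x ≠ 0 := by
  obtain ⟨s, hs, hsb⟩ := exists_isTranscendenceBasis_superset (R := k) (s := {x})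
    (by simpa [AlgebraicIndepOn] using hx)
  have hxs : x ∈ s := by simpa using hs
  let S := MvPolynomial s k
  let : Algebra S F := (MvPolynomial.aeval (R := k) (fun i : s => (i : F))).toAlgebra
  have hmap : ∀ p : S, algebraMap S F p = MvPolynomial.aeval (R := k) (fun i : s => (i : F)) p :=
    fun _ => rfl
  have : IsScalarTower k S F := IsScalarTower.of_algebraMap_eq (fun r => by
    rw [hmap]; simp [S])
  have hinj : Function.Injective (algebraMap S F) := hsb.1
  have : FaithfulSMul S F := (faithfulSMul_iff_algebraMap_injective S F).2 hinj
  have : Module.IsTorsionFree S F := inferInstance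
  let : Algebra (FractionRing S) F := FractionRing.liftAlgebra S F
  have : Algebra.IsAlgebraic S F := by
    have h := hsb.isAlgebraic
    constructor
    intro y
    obtain ⟨p, hp, hpy⟩ := h.isAlgebraic y
    let e := hsb.1.aevalEquiv
    refine ⟨p.map (e.symm : _ →+* S), ?_, ?_⟩
    · rwa [Ne, Polynomial.map_eq_zero_iff]
      exact e.symm.injective
    · rw [Polynomial.aeval_def, Polynomial.eval₂_map]
      rw [Polynomial.aeval_def] at hpy
      convert hpy using 2
      ext z
      obtain ⟨w, rfl⟩ := e.surjective z
      simp [hmap, e]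
  have : Algebra.IsAlgebraic (FractionRing S) F :=
    (IsFractionRing.comap_isAlgebraic_iff (A := S) (K := FractionRing S) (C := F)).1 inferInstance
  have : CharZero (FractionRing S) := charZero_of_injective_algebraMap (R := k)
    (algebraMap k (FractionRing S)).injective
  have : Algebra.FormallyEtale (FractionRing S) F := Algebra.FormallyEtale.of_isSeparable _ F
  have : Algebra.FormallyEtale S (FractionRing S) := 
    Algebra.FormallyEtale.of_isLocalization (nonZeroDivisors S)
  have : Algebra.FormallyEtale S F := Algebra.FormallyEtale.comp S (FractionRing S) F
  let e := KaehlerDifferential.tensorKaehlerEquivOfFormallyEtale k S F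
  let b := (KaehlerDifferential.mvPolynomialBasis k s).baseChange F
  refine ⟨((b.coord ⟨x, hxs⟩).comp e.symm.toLinearMap).compDer (KaehlerDifferential.D k F), ?_⟩
  have h1 : x = algebraMap S F (MvPolynomial.X ⟨x, hxs⟩) := by rw [hmap]; simp
  simp only [LinearMap.compDer, Derivation.coe_mk', LinearMap.coe_comp, Function.comp]
  have : e.symm (KaehlerDifferential.D k F x) = b ⟨x, hxs⟩ := by
    conv_lhs => rw [h1]
    rw [KaehlerDifferential.tensorKaehlerEquivOfFormallyEtale_symm_D_algebraMap]
    simp [b, KaehlerDifferential.mvPolynomialBasis_apply]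
    rfl
  simp [this]

theorem alg_dep_of_derivation {F : Type} [Field F] [Algebra ℂ F] (φ h : F) (hφ : Transcendental ℂ φ)
    (H : ∀ D : Derivation ℂ F F, D φ = 0 → D h = 0) :
    ∃ P : Polynomial (Polynomial ℂ), P ≠ 0 ∧
      P.eval₂ (Polynomial.aeval (R := ℂ) φ : Polynomial ℂ →+* F) h = 0 := by
  let _ : Algebra (Polynomial ℂ) F := (Polynomial.aeval (R := ℂ) φ).toAlgebra
  have hmap : ∀ p : Polynomial ℂ, algebraMap (Polynomial ℂ) F p = Polynomial.aeval (R := ℂ) φ p :=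
    fun _ => rfl
  have : IsScalarTower ℂ (Polynomial ℂ) F := IsScalarTower.of_algebraMap_eq (fun r => by
    rw [hmap]; simp)
  have hinj : Function.Injective (algebraMap (Polynomial ℂ) F) := transcendental_iff_injective.1 hφ
  have : FaithfulSMul (Polynomial ℂ) F := (faithfulSMul_iff_algebraMap_injective _ F).2 hinj
  let k := FractionRing (Polynomial ℂ)
  let _ : Algebra k F := FractionRing.liftAlgebra (Polynomial ℂ) F
  have : CharZero k := charZero_of_injective_algebraMap (R := ℂ)
    (algebraMap ℂ k).injective
  have : IsScalarTower ℂ k F := IsScalarTower.of_algebraMap_eq (fun r => by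
    rw [IsScalarTower.algebraMap_apply ℂ (Polynomial ℂ) F, IsScalarTower.algebraMap_apply ℂ (Polynomial ℂ) k,
      ← IsScalarTower.algebraMap_apply (Polynomial ℂ) k F])
  by_contra hcon
  have htr : Transcendental k h := by
    intro halg
    have h2 : IsAlgebraic (Polynomial ℂ) h := (IsFractionRing.isAlgebraic_iff (Polynomial ℂ) k F).2 halg
    obtain ⟨P, hP, hP0⟩ := h2
    exact hcon ⟨P, hP, hP0⟩
  obtain ⟨D, hD⟩ := exists_derivation_ne_zero h htr
  refine hD ?_
  refine H (D.restrictScalars ℂ) ?_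
  have h3 : φ = algebraMap k F (algebraMap (Polynomial ℂ) k Polynomial.X) := by
    rw [← IsScalarTower.algebraMap_apply, hmap]; simp
  rw [h3]
  exact D.map_algebraMap _

open MvPolynomial in
theorem hasDerivAt_eval {n : ℕ} (v : Fin n → MvPolynomial (Fin n) ℂ) (γ : ℝ → Fin n → ℂ) (t : ℝ)
    (hγ : HasDerivAt γ (fun i => eval (γ t) (v i)) t) (p : MvPolynomial (Fin n) ℂ) :
    HasDerivAt (fun s => eval (γ s) p) (eval (γ t) (mkDerivation ℂ v p)) t := by
  induction p using MvPolynomial.induction_on with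
  | C a => simpa using hasDerivAt_const t a
  | add p q hp hq =>
    simp only [map_add]
    exact hp.add hq
  | mul_X p i hp =>
    have h := hp.mul (hasDerivAt_pi.1 hγ i)
    simp only [map_mul, eval_X, Derivation.leibniz, mkDerivation_X, smul_eq_mul, map_add]
    refine (h.congr_deriv ?_)
    ring

open MvPolynomial in
theorem exists_flow {n : ℕ} (I : Ideal (MvPolynomial (Fin n) ℂ)) (v : Fin n → MvPolynomial (Fin n) ℂ)
    (hv : ∀ q ∈ I, mkDerivation ℂ v q ∈ I) (z0 : Fin n → ℂ) (hz0 : ∀ q ∈ I, eval z0 q = 0) :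
    ∃ (γ : ℝ → Fin n → ℂ) (ε : ℝ), 0 < ε ∧ γ 0 = z0 ∧ ∀ t ∈ Set.Ioo (-ε) ε,
      HasDerivAt γ (fun i => eval (γ t) (v i)) t ∧ ∀ q ∈ I, eval (γ t) q = 0 := by
  have hsm : ContDiff ℝ 1 (fun z : Fin n → ℂ => (fun i => eval z (v i))) := by
    rw [contDiff_pi]
    intro i
    induction v i using MvPolynomial.induction_on with
    | C a => simpa using contDiff_const
    | add p q hp hq => simpa using hp.add hq
    | mul_X p i hp => simpa using hp.mul (contDiff_apply ℝ ℂ i)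
  obtain ⟨γ, hγ0, ε, hε, hγ⟩ :=
    (hsm.contDiffAt (x := z0)).exists_forall_mem_closedBall_exists_eq_forall_mem_Ioo_hasDerivAt₀ 0
  obtain ⟨r, hr⟩ : I.FG := IsNoetherian.noetherian I
  have hmem : ∀ q : r, (q : MvPolynomial (Fin n) ℂ) ∈ I := fun q => by
    rw [← hr]; exact Ideal.subset_span q.2
  have hA : ∀ q : r, ∃ A : r → MvPolynomial (Fin n) ℂ, mkDerivation ℂ v (q : MvPolynomial (Fin n) ℂ) =
      ∑ s, A s * (s : MvPolynomial (Fin n) ℂ) := by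
    intro q
    have h1 := hv q (hmem q)
    rw [← hr] at h1
    obtain ⟨f, hf⟩ := Submodule.mem_span_finset'.1 h1
    exact ⟨f, by rw [← hf]; rfl⟩
  choose A hA using hA
  have hcont : ContinuousOn γ (Set.Icc (-(ε / 2)) (ε / 2)) := by
    intro t ht
    exact (hγ t ⟨by linarith [ht.1], by linarith [ht.2]⟩).continuousAt.continuousWithinAt
  have hcontA : ∀ q s, ContinuousOn (fun t => eval (γ t) (A q s)) (Set.Icc (-(ε / 2)) (ε / 2)) := by
    intro q s
    exact (MvPolynomial.continuous_eval (A q s)).comp_continuousOn hcont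
  have hbd : ∀ q s, ∃ C, ∀ t ∈ Set.Icc (-(ε / 2)) (ε / 2), ‖eval (γ t) (A q s)‖ ≤ C := fun q s =>
    isCompact_Icc.exists_bound_of_continuousOn (hcontA q s)
  choose C hC using hbd
  let K : NNReal := ∑ q, ∑ s, Real.toNNReal (C q s)
  have huniq := ODE_solution_unique_of_mem_Ioo (a := -(ε / 2)) (b := ε / 2) (t₀ := 0)
    (v := fun t (x : r → ℂ) => fun q => ∑ s, eval (γ t) (A q s) * x s) (s := fun _ => Set.univ) (K := K)
    (f := fun t q => eval (γ t) (q : MvPolynomial (Fin n) ℂ)) (g := fun _ => 0) (by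
      intro t ht
      rw [lipschitzOnWith_univ]
      refine LipschitzWith.of_dist_le_mul fun x y => ?_
      rw [dist_pi_le_iff (by positivity)]
      intro q
      rw [dist_eq_norm, ← Finset.sum_sub_distrib]
      simp only [← mul_sub]
      calc ‖∑ s, eval (γ t) (A q s) * (x s - y s)‖ ≤ ∑ s, (Real.toNNReal (C q s) : ℝ) * dist x y := by
            refine norm_sum_le_of_le _ fun s _ => ?_
            rw [norm_mul]
            have h1 : ‖eval (γ t) (A q s)‖ ≤ (Real.toNNReal (C q s) : ℝ) :=
              (hC q s t (Set.Ioo_subset_Icc_self ht)).trans (Real.le_coe_toNNReal _)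
            have h2 : ‖x s - y s‖ ≤ dist x y := by rw [← dist_eq_norm]; exact dist_le_pi_dist x y s
            gcongr
        _ = ((∑ s, Real.toNNReal (C q s) : NNReal) : ℝ) * dist x y := by
            rw [← Finset.sum_mul]; push_cast; rfl
        _ ≤ K * dist x y := by
            gcongr
            exact Finset.single_le_sum (f := fun q => ∑ s, Real.toNNReal (C q s)) (fun _ _ => zero_le) (Finset.mem_univ q))
    (by constructor <;> linarith) (by
      intro t ht
      refine ⟨?_, trivial⟩
      rw [hasDerivAt_pi]
      intro q
      have h1 := hasDerivAt_eval v γ t (hγ t ⟨by linarith [ht.1], by linarith [ht.2]⟩) q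
      rw [hA q] at h1
      simpa using h1) (by
      intro t ht
      refine ⟨?_, trivial⟩
      refine (hasDerivAt_const t (0 : r → ℂ)).congr_deriv ?_
      funext q
      simp) (by
      funext q
      simp only [hγ0, Pi.zero_apply]
      exact hz0 _ (hmem q))
  refine ⟨γ, ε / 2, by positivity, hγ0, fun t ht => ⟨hγ t ⟨by linarith [ht.1], by linarith [ht.2]⟩, ?_⟩⟩
  have h1 : I ≤ RingHom.ker (eval (γ t)) := by
    rw [← hr, Ideal.span_le]
    intro q hq
    have := congrFun (huniq ht) ⟨q, hq⟩
    simpa using this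
  intro q hq
  exact h1 hq

open MvPolynomial in
theorem deriv_lift {n : ℕ} {F : Type} [Field F] [Algebra ℂ F] (ι : MvPolynomial (Fin n) ℂ →ₐ[ℂ] F)
    (hfrac : ∀ x : F, ∃ p q, ι q ≠ 0 ∧ x = ι p / ι q) (d : Derivation ℂ F F) :
    ∃ (v : Fin n → MvPolynomial (Fin n) ℂ) (q : MvPolynomial (Fin n) ℂ), ι q ≠ 0 ∧
      ∀ p, ι (mkDerivation ℂ v p) = ι q * d (ι p) := by
  choose a b hb hab using fun i : Fin n => hfrac (d (ι (X i)))
  refine ⟨fun i => a i * ∏ j ∈ Finset.univ.erase i, b j, ∏ j, b j, ?_, ?_⟩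
  · rw [map_prod]
    exact Finset.prod_ne_zero_iff.2 fun i _ => hb i
  · intro p
    induction p using MvPolynomial.induction_on with
    | C a =>
      have h1 : ι (C a) = algebraMap ℂ F a := ι.commutes a
      have h2 : ∀ v : Fin n → MvPolynomial (Fin n) ℂ, mkDerivation ℂ v (C a) = 0 :=
        fun v => (mkDerivation ℂ v).map_algebraMap a
      rw [h1, h2]
      simp
    | add p q hp hq => simp only [map_add, hp, hq, mul_add]
    | mul_X p i hp =>
      simp only [Derivation.leibniz, mkDerivation_X, smul_eq_mul, map_add, map_mul, hp, hab i]
      rw [← Finset.mul_prod_erase Finset.univ b (Finset.mem_univ i), map_mul]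
      have := hb i
      field_simp

theorem transcendental_of_nonconst {F : Type} [Field F] [Algebra ℂ F] (x : F)
    (hx : ∀ a : ℂ, x - algebraMap ℂ F a ≠ 0) : Transcendental ℂ x := by
  intro h
  have hs := IsAlgClosed.splits (minpoly ℂ x)
  have hi := minpoly.irreducible h.isIntegral
  have h1 : (minpoly ℂ x).degree = 1 := IsAlgClosed.degree_eq_one_of_irreducible ℂ hi
  obtain ⟨a, ha⟩ := minpoly.mem_range_of_degree_eq_one ℂ x h1
  exact hx a (by rw [ha, sub_self])

open Filter Topology in
theorem no_exp_alg (P : Polynomial (Polynomial ℂ)) (hP : P ≠ 0) (K : ℂ) (hK : K ≠ 0) (p : ℝ → ℂ) (p' : ℂ)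
    (hp : HasDerivAt p p' 0) (hp' : p' ≠ 0)
    (H : ∀ᶠ t in 𝓝 (0 : ℝ), (P.map (Polynomial.evalRingHom (p t))).eval (K * Complex.exp (-p t)) = 0) :
    False := by
  let g : ℂ → ℂ := fun x => (P.map (Polynomial.evalRingHom x)).eval (K * Complex.exp (-x))
  have hg : ∀ x, g x = ∑ j ∈ Finset.range (P.natDegree + 1), (P.coeff j).eval x * (K * Complex.exp (-x)) ^ j := by
    intro x
    simp only [g]
    rw [Polynomial.eval_map, Polynomial.eval₂_eq_sum_range]
    rfl
  have hd : Differentiable ℂ g := by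
    have : g = fun x => ∑ j ∈ Finset.range (P.natDegree + 1), (P.coeff j).eval x * (K * Complex.exp (-x)) ^ j :=
      funext hg
    rw [this]
    fun_prop
  have han : AnalyticOnNhd ℂ g Set.univ := fun x _ => hd.analyticAt x
  have htend : Tendsto p (𝓝[≠] 0) (𝓝[≠] (p 0)) := hp.tendsto_nhdsNE hp'
  have hfr : ∃ᶠ x in 𝓝[≠] (p 0), g x = 0 := by
    refine htend.frequently ?_
    refine Eventually.frequently ?_
    exact H.filter_mono nhdsWithin_le_nhds
  have hz := han.eqOn_zero_of_preconnected_of_frequently_eq_zero isPreconnected_univ (Set.mem_univ _) hfr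
  refine hP (poly_two_zero P ?_)
  have hsub : {y : ℂ | y ≠ 0} ⊆ {y : ℂ | {x : ℂ | (P.map (Polynomial.evalRingHom x)).eval y = 0}.Infinite} := by
    intro y hy
    have hy : y ≠ 0 := hy
    have hKy : K / y ≠ 0 := div_ne_zero hK hy
    let x0 := Complex.log (K / y)
    have hx : ∀ k : ℕ, K * Complex.exp (-(x0 + k * (2 * Real.pi * Complex.I))) = y := by
      intro k
      rw [Complex.exp_neg, Complex.exp_add, Complex.exp_nat_mul_two_pi_mul_I, mul_one, Complex.exp_log hKy]
      field_simp
    refine Set.infinite_of_injective_forall_mem (f := fun k : ℕ => x0 + k * (2 * Real.pi * Complex.I)) ?_ ?_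
    · intro k l hkl
      have := Complex.two_pi_I_ne_zero
      simpa [this] using hkl
    · intro k
      have := hz (Set.mem_univ (x0 + k * (2 * Real.pi * Complex.I)))
      simp only [g, hx k, Pi.zero_apply] at this
      exact this
  refine Set.Infinite.mono hsub ?_
  exact (Set.finite_singleton (0 : ℂ)).infinite_compl

theorem field_aux {F : Type} [Field F] (A B C D : F) (hC : C ≠ 0) : A * B * D = D * C * (A * (B / C)) := by
  field_simp

open MvPolynomial Filter Topology in
theorem two_term {n : ℕ} (I : Ideal (MvPolynomial (Fin n) ℂ)) (hprime : I.IsPrime)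
    (hI : ∀ p, (∀ z, (∀ q ∈ I, eval z q = 0) → eval z p = 0) → p ∈ I)
    (c1 c2 φ : MvPolynomial (Fin n) ℂ) (hc1 : c1 ∉ I) (hc2 : c2 ∉ I)
    (hφ : ∀ a, φ - C a ∉ I)
    (H : ∀ v, (∀ q ∈ I, mkDerivation ℂ v q ∈ I) →
      c1 * (mkDerivation ℂ v c2 + c2 * mkDerivation ℂ v φ) - c2 * mkDerivation ℂ v c1 ∈ I) : False := by
  let A := MvPolynomial (Fin n) ℂ ⧸ I
  let F := FractionRing A
  let ι : MvPolynomial (Fin n) ℂ →ₐ[ℂ] F := (IsScalarTower.toAlgHom ℂ A F).comp (Ideal.Quotient.mkₐ ℂ I)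
  have hι : ∀ p, ι p = algebraMap A F (Ideal.Quotient.mk I p) := fun _ => rfl
  have hker : ∀ p, ι p = 0 ↔ p ∈ I := by
    intro p
    rw [hι, FaithfulSMul.algebraMap_eq_zero_iff, Ideal.Quotient.eq_zero_iff_mem]
  have hfrac : ∀ x : F, ∃ p q, ι q ≠ 0 ∧ x = ι p / ι q := by
    intro x
    obtain ⟨a, b, hb, rfl⟩ := IsFractionRing.div_surjective (A := A) x
    obtain ⟨p, rfl⟩ := Ideal.Quotient.mk_surjective a
    obtain ⟨q, rfl⟩ := Ideal.Quotient.mk_surjective b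
    refine ⟨p, q, ?_, rfl⟩
    rw [hι, Ne, FaithfulSMul.algebraMap_eq_zero_iff]
    exact nonZeroDivisors.ne_zero hb
  have htr : Transcendental ℂ (ι φ) := by
    refine transcendental_of_nonconst _ fun a h0 => hφ a ?_
    rw [← hker, map_sub]
    rw [← h0]
    congr 1
  have hn1 : ι c1 ≠ 0 := fun h => hc1 ((hker _).1 h)
  have hn2 : ι c2 ≠ 0 := fun h => hc2 ((hker _).1 h)
  have hpres : ∀ (d : Derivation ℂ F F) v q, (∀ p, ι (mkDerivation ℂ v p) = ι q * d (ι p)) →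
      ∀ q ∈ I, mkDerivation ℂ v q ∈ I := by
    intro d v q hv p hp
    rw [← hker, hv, (hker p).2 hp]
    simp
  obtain ⟨P, hP, hP0⟩ := alg_dep_of_derivation (ι φ) (ι c2 / ι c1) htr (by
    intro d hd
    obtain ⟨v, q, hq, hv⟩ := deriv_lift ι hfrac d
    have h1 := (hker _).2 (H v (hpres d v q hv))
    simp only [map_sub, map_mul, map_add, hv, hd] at h1
    rw [Derivation.leibniz_div]
    have h2 : ι q * (ι c1 * d (ι c2) - ι c2 * d (ι c1)) = 0 := by linear_combination h1
    have h3 := (mul_eq_zero.1 h2).resolve_left hq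
    simp only [smul_eq_mul, h3, mul_zero])
  obtain ⟨d, hd⟩ := exists_derivation_ne_zero (ι φ) htr
  obtain ⟨v, q, hq, hv⟩ := deriv_lift ι hfrac d
  have hvI := hpres d v q hv
  have hDφ : mkDerivation ℂ v φ ∉ I := by
    rw [← hker, hv]
    exact mul_ne_zero hq hd
  have hprod : c1 * c2 * mkDerivation ℂ v φ ∉ I := by
    intro h
    rcases hprime.mem_or_mem h with h | h
    · rcases hprime.mem_or_mem h with h | h
      · exact hc1 h
      · exact hc2 h
    · exact hDφ h
  obtain ⟨z0, hz0, hz0'⟩ : ∃ z0, (∀ q ∈ I, eval z0 q = 0) ∧ eval z0 (c1 * c2 * mkDerivation ℂ v φ) ≠ 0 := by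
    by_contra hcon
    push Not at hcon
    exact hprod (hI _ hcon)
  simp only [map_mul] at hz0'
  have ha0 : eval z0 c1 ≠ 0 := fun h => hz0' (by simp [h])
  have hb0 : eval z0 c2 ≠ 0 := fun h => hz0' (by simp [h])
  have hp0 : eval z0 (mkDerivation ℂ v φ) ≠ 0 := fun h => hz0' (by simp [h])
  obtain ⟨γ, ε, hε, hγ0, hγ⟩ := exists_flow I v hvI z0 hz0
  have hcont : ContinuousAt (fun t => eval (γ t) c1) 0 :=
    (hasDerivAt_eval v γ 0 (hγ 0 ⟨by linarith, hε⟩).1 c1).continuousAt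
  have hev : ∀ᶠ t in 𝓝 (0 : ℝ), eval (γ t) c1 ≠ 0 :=
    hcont.eventually_ne (by simpa [hγ0] using ha0)
  obtain ⟨δ, hδ, hδ'⟩ := Metric.eventually_nhds_iff.1 (hev.and (Ioo_mem_nhds (show -ε < 0 by linarith) hε))
  have hmem : ∀ t ∈ Set.Ioo (-δ) δ, eval (γ t) c1 ≠ 0 ∧ t ∈ Set.Ioo (-ε) ε := by
    intro t ht
    exact hδ' (by rw [Real.dist_eq, sub_zero, abs_lt]; exact ht)
  let G : ℝ → ℂ := fun t => eval (γ t) c2 * Complex.exp (eval (γ t) φ) / eval (γ t) c1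
  have hG : ∀ t ∈ Set.Ioo (-δ) δ, HasDerivAt G 0 t := by
    intro t ht
    obtain ⟨h1, h2⟩ := hmem t ht
    obtain ⟨h3, h4⟩ := hγ t h2
    have hd1 := hasDerivAt_eval v γ t h3 c1
    have hd2 := hasDerivAt_eval v γ t h3 c2
    have hd3 := hasDerivAt_eval v γ t h3 φ
    have h5 := h4 _ (H v hvI)
    simp only [map_sub, map_mul, map_add] at h5
    refine ((hd2.mul hd3.cexp).div hd1 h1).congr_deriv ?_
    rw [div_eq_zero_iff]
    left
    simp only [Pi.mul_apply]
    linear_combination Complex.exp (eval (γ t) φ) * h5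
  have hconst : ∀ t ∈ Set.Ioo (-δ) δ, G t = G 0 := by
    intro t ht
    refine isOpen_Ioo.is_const_of_deriv_eq_zero (𝕜 := ℝ) (s := Set.Ioo (-δ) δ) isPreconnected_Ioo ?_ ?_ ht ⟨by linarith, hδ⟩
    · intro s hs
      exact (hG s hs).differentiableAt.differentiableWithinAt
    · intro s hs
      exact (hG s hs).deriv
  let Q : MvPolynomial (Fin n) ℂ := ∑ j ∈ Finset.range (P.natDegree + 1),
    Polynomial.aeval φ (P.coeff j) * c2 ^ j * c1 ^ (P.natDegree - j)
  have hQ : Q ∈ I := by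
    rw [← hker]
    have h1 : ι Q = ι c1 ^ P.natDegree * P.eval₂ (Polynomial.aeval (R := ℂ) (ι φ) : Polynomial ℂ →+* F) (ι c2 / ι c1) := by
      rw [Polynomial.eval₂_eq_sum_range, Finset.mul_sum]
      simp only [Q, map_sum, map_mul, map_pow]
      refine Finset.sum_congr rfl fun j hj => ?_
      have hj' : j ≤ P.natDegree := by simpa [Nat.lt_succ_iff] using hj
      have h2 : ι (Polynomial.aeval φ (P.coeff j)) = Polynomial.aeval (ι φ) (P.coeff j) :=
        (Polynomial.aeval_algHom_apply ι φ (P.coeff j)).symm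
      rw [h2]
      have h3 : ι c1 ^ P.natDegree = ι c1 ^ (P.natDegree - j) * ι c1 ^ j := by
        rw [← pow_add, Nat.sub_add_cancel hj']
      rw [h3, div_pow]
      exact field_aux _ _ _ _ (pow_ne_zero j hn1)
    rw [h1, hP0, mul_zero]
  refine no_exp_alg P hP (G 0) ?_ (fun t => eval (γ t) φ) (eval (γ 0) (mkDerivation ℂ v φ))
    (hasDerivAt_eval v γ 0 (hγ 0 ⟨by linarith, hε⟩).1 φ) (by rw [hγ0]; exact hp0) ?_
  · simp only [G, hγ0]
    exact div_ne_zero (mul_ne_zero hb0 (Complex.exp_ne_zero _)) ha0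
  · filter_upwards [Ioo_mem_nhds (show -δ < 0 by linarith) hδ] with t ht
    obtain ⟨h1, h2⟩ := hmem t ht
    have h3 := (hγ t h2).2 Q hQ
    have h4 : G 0 * Complex.exp (-(eval (γ t) φ)) = eval (γ t) c2 / eval (γ t) c1 := by
      rw [← hconst t ht]
      simp only [G]
      rw [Complex.exp_neg]
      have := Complex.exp_ne_zero (eval (γ t) φ)
      field_simp
    rw [h4, Polynomial.eval_map, Polynomial.eval₂_eq_sum_range]
    have h5 : eval (γ t) Q = eval (γ t) c1 ^ P.natDegree * ∑ j ∈ Finset.range (P.natDegree + 1),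
        Polynomial.evalRingHom (eval (γ t) φ) (P.coeff j) * (eval (γ t) c2 / eval (γ t) c1) ^ j := by
      rw [Finset.mul_sum]
      simp only [Q, map_sum, map_mul, map_pow]
      refine Finset.sum_congr rfl fun j hj => ?_
      have hj' : j ≤ P.natDegree := by simpa [Nat.lt_succ_iff] using hj
      have h2 : eval (γ t) (Polynomial.aeval φ (P.coeff j)) = (P.coeff j).eval (eval (γ t) φ) := by
        have := (Polynomial.aeval_algHom_apply (aeval (R := ℂ) (γ t)) φ (P.coeff j)).symm
        simpa [MvPolynomial.aeval_eq_eval] using this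
      rw [h2]
      have h3 : eval (γ t) c1 ^ P.natDegree = eval (γ t) c1 ^ (P.natDegree - j) * eval (γ t) c1 ^ j := by
        rw [← pow_add, Nat.sub_add_cancel hj']
      rw [h3, div_pow]
      exact field_aux _ _ _ _ (pow_ne_zero j h1)
    rw [h5] at h3
    exact (mul_eq_zero.1 h3).resolve_left (pow_ne_zero _ h1)

open MvPolynomial in
theorem exp_li {n : ℕ} (I : Ideal (MvPolynomial (Fin n) ℂ)) (hprime : I.IsPrime)
    (hI : ∀ p, (∀ z, (∀ q ∈ I, eval z q = 0) → eval z p = 0) → p ∈ I)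
    {κ : Type} [DecidableEq κ] (f : κ → MvPolynomial (Fin n) ℂ) (s : Finset κ) :
    (∀ i ∈ s, ∀ j ∈ s, i ≠ j → ∀ a, f i - f j - C a ∉ I) → ∀ c : κ → MvPolynomial (Fin n) ℂ,
    (∀ z, (∀ q ∈ I, eval z q = 0) → ∑ i ∈ s, eval z (c i) * Complex.exp (eval z (f i)) = 0) →
    ∀ i ∈ s, c i ∈ I := by
  induction s using Finset.induction_on with
  | empty => intro _ _ _ i hi; simp at hi
  | insert k s hk ih =>
    intro hf c hc
    have hf' : ∀ i ∈ s, ∀ j ∈ s, i ≠ j → ∀ a, f i - f j - C a ∉ I := fun i hi j hj =>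
      hf i (Finset.mem_insert_of_mem hi) j (Finset.mem_insert_of_mem hj)
    have ih := ih hf'
    by_cases hck : c k ∈ I
    · have h1 : ∀ i ∈ s, c i ∈ I := by
        refine ih c fun z hz => ?_
        have := hc z hz
        rw [Finset.sum_insert hk, hz _ hck] at this
        simpa using this
      intro i hi
      rcases Finset.mem_insert.1 hi with rfl | hi
      · exact hck
      · exact h1 i hi
    · exfalso
      by_cases hall : ∀ i ∈ s, c i ∈ I
      · refine hck (hI _ fun z hz => ?_)
        have := hc z hz
        rw [Finset.sum_insert hk, Finset.sum_eq_zero (fun i hi => by rw [hz _ (hall i hi), zero_mul]), add_zero] at this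
        exact (mul_eq_zero.1 this).resolve_right (Complex.exp_ne_zero _)
      · push Not at hall
        obtain ⟨i, hi, hci⟩ := hall
        refine two_term I hprime hI (c k) (c i) (f i - f k) hck hci
          (hf i (Finset.mem_insert_of_mem hi) k (Finset.mem_insert_self _ _) (by rintro rfl; exact hk hi)) ?_
        intro v hv
        have key := ih (fun i => c k * (mkDerivation ℂ v (c i) + c i * mkDerivation ℂ v (f i)) -
          c i * (mkDerivation ℂ v (c k) + c k * mkDerivation ℂ v (f k))) ?_ i hi
        · convert key using 1
          simp only [map_sub]
          ring
        · intro z hz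
          obtain ⟨γ, ε, hε, hγ0, hγ⟩ := exists_flow I v hv z hz
          have hsum : HasDerivAt (fun t => ∑ i ∈ insert k s, eval (γ t) (c i) * Complex.exp (eval (γ t) (f i)))
              (∑ i ∈ insert k s, (eval (γ 0) (mkDerivation ℂ v (c i)) * Complex.exp (eval (γ 0) (f i)) +
                eval (γ 0) (c i) * (Complex.exp (eval (γ 0) (f i)) * eval (γ 0) (mkDerivation ℂ v (f i))))) 0 := by
            refine HasDerivAt.fun_sum fun i _ => ?_
            have h3 := (hγ 0 ⟨by linarith, hε⟩).1
            exact (hasDerivAt_eval v γ 0 h3 (c i)).mul (hasDerivAt_eval v γ 0 h3 (f i)).cexp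
          have hzero : HasDerivAt (fun t => ∑ i ∈ insert k s, eval (γ t) (c i) * Complex.exp (eval (γ t) (f i))) 0 0 := by
            refine (hasDerivAt_const (0 : ℝ) (0 : ℂ)).congr_of_eventuallyEq ?_
            filter_upwards [Ioo_mem_nhds (show -ε < 0 by linarith) hε] with t ht
            exact hc _ (hγ t ht).2
          have h1 := hsum.unique hzero
          rw [hγ0, Finset.sum_insert hk] at h1
          have h2 := hc z hz
          rw [Finset.sum_insert hk] at h2
          have h3 : ∑ i ∈ s, eval z (c k * (mkDerivation ℂ v (c i) + c i * mkDerivation ℂ v (f i)) -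
            c i * (mkDerivation ℂ v (c k) + c k * mkDerivation ℂ v (f k))) * Complex.exp (eval z (f i)) =
            eval z (c k) * (∑ i ∈ s, (eval z (mkDerivation ℂ v (c i)) * Complex.exp (eval z (f i)) +
                eval z (c i) * (Complex.exp (eval z (f i)) * eval z (mkDerivation ℂ v (f i))))) -
            eval z (mkDerivation ℂ v (c k) + c k * mkDerivation ℂ v (f k)) *
              ∑ i ∈ s, eval z (c i) * Complex.exp (eval z (f i)) := by
            rw [Finset.mul_sum, Finset.mul_sum, ← Finset.sum_sub_distrib]
            refine Finset.sum_congr rfl fun i _ => ?_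
            simp only [map_sub, map_mul, map_add]
            ring
          rw [h3]
          simp only [map_mul, map_add]
          linear_combination eval z (c k) * h1 - (eval z (mkDerivation ℂ v (c k)) + eval z (c k) * eval z (mkDerivation ℂ v (f k))) * h2

theorem geom_zero {n : ℕ} (I : Ideal (MvPolynomial (Fin n) ℂ)) (hprime : I.IsPrime)
    (hI : ∀ p, (∀ z, (∀ q ∈ I, eval z q = 0) → eval z p = 0) → p ∈ I)
    (Z : Set (Fin n → ℂ)) (hZ : ∀ z, z ∈ Z ↔ ∀ q ∈ I, eval z q = 0) (z0 : Fin n → ℂ) (hz0 : z0 ∈ Z)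
    (g : MvPolynomial (Fin n) ℂ) (hg : ∀ z ∈ Z, eval (expMap n z) g = 0) (w : Fin n → ℂ)
    (hw : ∀ m : Fin n → ℤ, (∀ z ∈ Z, ∑ i, (m i : ℂ) * z i = ∑ i, (m i : ℂ) * z0 i) →
      ∑ i, (m i : ℂ) * w i = ∑ i, (m i : ℂ) * z0 i) :
    eval (expMap n w) g = 0 := by
  classical
  let κ := Fin n →₀ ℕ
  let dot : κ → (Fin n → ℂ) → ℂ := fun m z => ∑ i, (m i : ℂ) * z i
  let e : ℂ := 2 * (Real.pi : ℂ) * Complex.I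
  have he : e ≠ 0 := Complex.two_pi_I_ne_zero
  let S : Setoid κ := {
    r := fun m k => ∀ z ∈ Z, dot m z - dot k z = dot m z0 - dot k z0
    iseqv := ⟨fun _ _ _ => by ring, fun h z hz => by linear_combination - h z hz,
      fun h h' z hz => by linear_combination h z hz + h' z hz⟩ }
  let ρ : κ → κ := fun m => (Quotient.mk S m).out
  have hρ : ∀ m, ∀ z ∈ Z, dot m z - dot (ρ m) z = dot m z0 - dot (ρ m) z0 := by
    intro m
    exact S.symm (Quotient.mk_out (s := S) m)
  have hρ' : ∀ m k, (∀ z ∈ Z, dot m z - dot k z = dot m z0 - dot k z0) → ρ m = ρ k := by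
    intro m k h
    have : Quotient.mk S m = Quotient.mk S k := Quotient.sound h
    simp only [ρ, this]
  have hρρ : ∀ m, ρ (ρ m) = ρ m := fun m => (hρ' _ _ (hρ m)).symm
  let s : Finset κ := g.support.image ρ
  let B : κ → ℂ := fun k => ∑ m ∈ g.support with ρ m = k, coeff m g * Complex.exp (e * (dot m z0 - dot k z0))
  have heval : ∀ z, eval (expMap n z) g = ∑ m ∈ g.support, coeff m g * Complex.exp (e * dot m z) := by
    intro z
    rw [eval_eq']
    refine Finset.sum_congr rfl fun m _ => ?_
    congr 1
    simp only [expMap, dot, Finset.mul_sum, Complex.exp_sum, ← Complex.exp_nat_mul]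
    refine Finset.prod_congr rfl fun i _ => ?_
    congr 1
    simp only [e]
    ring
  have hreg : ∀ z, (∀ m, dot m z - dot (ρ m) z = dot m z0 - dot (ρ m) z0) →
      eval (expMap n z) g = ∑ k ∈ s, B k * Complex.exp (e * dot k z) := by
    intro z hz
    rw [heval, ← Finset.sum_fiberwise_of_maps_to (t := s) (g := ρ) (fun m hm => Finset.mem_image_of_mem ρ hm)]
    refine Finset.sum_congr rfl fun k _ => ?_
    simp only [B, Finset.sum_mul]
    refine Finset.sum_congr rfl fun m hm => ?_
    obtain rfl := (Finset.mem_filter.1 hm).2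
    rw [← hz m, mul_assoc (coeff m g), ← Complex.exp_add]
    congr 2
    ring
  let f : κ → MvPolynomial (Fin n) ℂ := fun m => ∑ i, C (e * (m i : ℂ)) * X i
  have hf : ∀ m z, eval z (f m) = e * dot m z := by
    intro m z
    simp only [f, dot, map_sum, map_mul, eval_C, eval_X, Finset.mul_sum, mul_assoc]
  have hB : ∀ k ∈ s, B k = 0 := by
    have := exp_li I hprime hI f s ?_ (fun k => C (B k)) ?_
    · intro k hk
      have h1 := (hZ z0).1 hz0 _ (this k hk)
      simpa using h1
    · intro i hi j hj hij a ha
      apply hij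
      obtain ⟨m, _, rfl⟩ := Finset.mem_image.1 hi
      obtain ⟨k, _, rfl⟩ := Finset.mem_image.1 hj
      rw [← hρρ m, ← hρρ k]
      refine hρ' _ _ fun z hz => ?_
      have h1 := (hZ z).1 hz _ ha
      have h2 := (hZ z0).1 hz0 _ ha
      simp only [map_sub, hf, eval_C] at h1 h2
      refine mul_left_cancel₀ he ?_
      linear_combination h1 - h2
    · intro z hz
      have hz' := (hZ z).2 hz
      rw [← hg z hz', hreg z (fun m => hρ m z hz')]
      simp only [eval_C, hf]
  rw [hreg w ?_]
  · exact Finset.sum_eq_zero fun k hk => by rw [hB k hk, zero_mul]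
  · intro m
    have key := hw (fun i => (m i : ℤ) - (ρ m i : ℤ)) ?_
    · simp only [Int.cast_sub, Int.cast_natCast, sub_mul, Finset.sum_sub_distrib] at key
      exact key
    · intro z hz
      simp only [Int.cast_sub, Int.cast_natCast, sub_mul, Finset.sum_sub_distrib]
      exact hρ m z hz

theorem qbar_point {n : ℕ} (P : Set (MvPolynomial (Fin n) ℂ)) (hP : ∀ p ∈ P, ∀ m, IsAlgebraic ℚ (coeff m p))
    (h : MvPolynomial (Fin n) ℚ) (z : Fin n → ℂ) (hz : ∀ p ∈ P, eval z p = 0) (hh : aeval z h ≠ 0) :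
    ∃ w : Fin n → ℂ, (∀ i, IsAlgebraic ℚ (w i)) ∧ (∀ p ∈ P, eval w p = 0) ∧ aeval w h ≠ 0 := by
  let K := algebraicClosure ℚ ℂ
  have : IsAlgClosed K := (algebraicClosure.isAlgClosure ℚ ℂ).isAlgClosed
  let J : Ideal (MvPolynomial (Fin n) K) := Ideal.span {p | map (algebraMap K ℂ) p ∈ P}
  let hK : MvPolynomial (Fin n) K := map (algebraMap ℚ K) h
  have hlift : ∀ p ∈ P, ∃ q : MvPolynomial (Fin n) K, map (algebraMap K ℂ) q = p := by
    intro p hp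
    have h1 : p ∈ Set.range (map (algebraMap K ℂ)) := by
      rw [MvPolynomial.mem_range_map_iff_coeffs_subset]
      intro c hc
      obtain ⟨m, _, rfl⟩ := MvPolynomial.mem_coeffs_iff.1 hc
      exact ⟨⟨coeff m p, mem_algebraicClosure_iff.2 (hP p hp m)⟩, rfl⟩
    exact h1
  by_contra hcon
  push Not at hcon
  have hvan : hK ∈ vanishingIdeal K (zeroLocus K J) := by
    rw [mem_vanishingIdeal_iff]
    intro x hx
    have h1 := hcon (fun i => (x i : ℂ)) (fun i => mem_algebraicClosure_iff.1 (x i).2) ?_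
    · have h2 : aeval (fun i => (x i : ℂ)) h = algebraMap K ℂ (aeval x hK) := by
        simp only [hK]
        rw [aeval_map_algebraMap, ← aeval_algebraMap_apply]
        rfl
      rw [h2] at h1
      exact (map_eq_zero _).1 h1
    · intro p hp
      obtain ⟨q, rfl⟩ := hlift p hp
      have h3 := hx q (Ideal.subset_span hp)
      rw [eval_map]
      have h4 : aeval (fun i => (x i : ℂ)) q = algebraMap K ℂ (aeval x q) :=
        aeval_algebraMap_apply ℂ x q
      rw [h3, map_zero] at h4
      exact h4
  rw [vanishingIdeal_zeroLocus_eq_radical] at hvan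
  obtain ⟨N, hN⟩ := hvan
  have h1 : ∀ q ∈ J, eval z (map (algebraMap K ℂ) q) = 0 := by
    have : J ≤ RingHom.ker ((eval z).comp (map (algebraMap K ℂ))) := by
      rw [Ideal.span_le]
      intro q hq
      exact hz _ hq
    intro q hq
    exact this hq
  have h2 := h1 _ hN
  rw [map_pow, map_pow] at h2
  have h3 := eq_zero_of_pow_eq_zero h2
  apply hh
  simp only [hK] at h3
  rw [map_map, ← IsScalarTower.algebraMap_eq, eval_map] at h3
  exact h3

theorem span_int {n : ℕ} (M : Set (Fin n → ℤ)) (v : Fin n → ℂ) (hv : ∀ m ∈ M, ∑ i, (m i : ℂ) * v i = 0) :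
    v ∈ Submodule.span ℂ {x : Fin n → ℂ | ∃ u : Fin n → ℤ, (∀ m ∈ M, ∑ i, m i * u i = 0) ∧ x = fun i => (u i : ℂ)} := by
  classical
  let b := Module.Basis.ofVectorSpace ℚ ℂ
  let S := Finset.univ.biUnion fun i => (b.repr (v i)).support
  have h1 : v = ∑ k ∈ S, b k • (fun i => ((b.repr (v i) k : ℚ) : ℂ)) := by
    funext i
    rw [Finset.sum_apply]
    conv_lhs => rw [← b.linearCombination_repr (v i), Finsupp.linearCombination_apply]
    rw [Finsupp.sum_of_support_subset (s := S)]
    · refine Finset.sum_congr rfl fun k _ => ?_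
      simp only [Pi.smul_apply, smul_eq_mul]
      rw [Rat.smul_def, mul_comm]
    · exact Finset.subset_biUnion_of_mem (fun i => (b.repr (v i)).support) (Finset.mem_univ i)
    · intro k _
      exact zero_smul _ _
  rw [h1]
  refine Submodule.sum_mem _ fun k _ => Submodule.smul_mem _ _ ?_
  let q : Fin n → ℚ := fun i => b.repr (v i) k
  have hq : ∀ m ∈ M, ∑ i, (m i : ℚ) * q i = 0 := by
    intro m hm
    have h2 : b.repr (∑ i, (m i : ℂ) * v i) k = ∑ i, (m i : ℚ) * q i := by
      rw [map_sum, Finsupp.finsetSum_apply]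
      refine Finset.sum_congr rfl fun i _ => ?_
      have : (m i : ℂ) * v i = (m i : ℚ) • v i := by rw [Rat.smul_def]; simp
      rw [this, map_smul]
      rfl
    rw [← h2, hv m hm]
    simp
  let N : ℕ := ∏ i, (q i).den
  have hN : (N : ℚ) ≠ 0 := by
    have : N ≠ 0 := Finset.prod_ne_zero_iff.2 fun i _ => (q i).den_ne_zero
    exact_mod_cast this
  have hu : ∀ i, ∃ u : ℤ, (u : ℚ) = N * q i := by
    intro i
    refine ⟨(∏ j ∈ Finset.univ.erase i, (q j).den : ℕ) * (q i).num, ?_⟩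
    simp only [N]
    rw [← Finset.mul_prod_erase Finset.univ (fun i => (q i).den) (Finset.mem_univ i)]
    have := Rat.mul_den_eq_num (q i)
    push_cast
    rw [← this]
    ring
  choose u hu using hu
  have h3 : (fun i => ((b.repr (v i) k : ℚ) : ℂ)) = ((N : ℂ)⁻¹) • (fun i => (u i : ℂ)) := by
    funext i
    have hNC : (N : ℂ) ≠ 0 := by exact_mod_cast hN
    simp only [Pi.smul_apply, smul_eq_mul]
    rw [eq_inv_mul_iff_mul_eq₀ hNC]
    have := congrArg (fun x : ℚ => (x : ℂ)) (hu i)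
    simp only [Rat.cast_mul, Rat.cast_natCast, Rat.cast_intCast] at this
    exact this.symm
  rw [h3]
  refine Submodule.smul_mem _ _ (Submodule.subset_span ⟨u, ?_, rfl⟩)
  intro m hm
  have h4 : (∑ i, (m i : ℚ) * (u i : ℚ)) = 0 := by
    simp only [hu]
    rw [← mul_zero (N : ℚ), ← hq m hm, Finset.mul_sum]
    exact Finset.sum_congr rfl fun i _ => by ring
  exact_mod_cast h4

theorem exists_gens {n : ℕ} (M : Set (Fin n → ℤ)) : ∃ (k : ℕ) (a : Fin k → Fin n → ℤ),
    (∀ m ∈ M, ∀ j, ∑ i, m i * a j i = 0) ∧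
    ∀ v : Fin n → ℂ, (∀ m ∈ M, ∑ i, (m i : ℂ) * v i = 0) → ∃ t : Fin k → ℂ, ∀ i, v i = ∑ j, t j * (a j i : ℂ) := by
  let U : Submodule ℤ (Fin n → ℤ) :=
    { carrier := {u | ∀ m ∈ M, ∑ i, m i * u i = 0}
      zero_mem' := fun m _ => by simp
      add_mem' := fun {x y} hx hy m hm => by
        simp only [Pi.add_apply, mul_add, Finset.sum_add_distrib, hx m hm, hy m hm, add_zero]
      smul_mem' := fun c x hx m hm => by
        have := hx m hm
        simp only [Pi.smul_apply, smul_eq_mul, mul_left_comm _ c, ← Finset.mul_sum, this, mul_zero] }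
  obtain ⟨k, a, ha⟩ := Submodule.fg_iff_exists_fin_generating_family.1 (IsNoetherian.noetherian U)
  have haU : ∀ j, a j ∈ U := fun j => by rw [← ha]; exact Submodule.subset_span ⟨j, rfl⟩
  refine ⟨k, a, fun m hm j => haU j m hm, fun v hv => ?_⟩
  have h1 : v ∈ Submodule.span ℂ (Set.range fun j => (fun i => (a j i : ℂ))) := by
    refine (Submodule.span_le.2 ?_) (span_int M v hv)
    rintro _ ⟨u, hu, rfl⟩
    have h2 : u ∈ Submodule.span ℤ (Set.range a) := by rw [ha]; exact hu
    obtain ⟨c, hc⟩ := (Submodule.mem_span_range_iff_exists_fun ℤ).1 h2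
    refine (Submodule.mem_span_range_iff_exists_fun ℂ).2 ⟨fun j => (c j : ℂ), ?_⟩
    funext i
    rw [← hc]
    simp [Finset.sum_apply]
  obtain ⟨t, ht⟩ := (Submodule.mem_span_range_iff_exists_fun ℂ).1 h1
  refine ⟨t, fun i => ?_⟩
  rw [← ht]
  simp [Finset.sum_apply]

theorem exp_image_is_torsion_translate (n : ℕ) (hn : 1 ≤ n)
    (Z : Set (Fin n → ℂ))
    (hZne : Z.Nonempty)
    (hZclosed : ZClosedQbar n Z) (hZirr : IsIrrOf (ZClosed n) Z)
    (hEclosed : ZClosedTorusQbar n (expMap n '' Z))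
    (hEirr : IsIrrOf (ZClosedTorus n) (expMap n '' Z)) :
    IsTorsionTranslateOfSubtorus n (expMap n '' Z) := by
  obtain ⟨P, hPalg, hPZ⟩ := hZclosed
  obtain ⟨Q, hQalg, hQE⟩ := hEclosed
  have hPZ' : ∀ z, z ∈ Z ↔ ∀ p ∈ P, eval z p = 0 := fun z => by rw [hPZ]; rfl
  have hQE' : ∀ w, w ∈ expMap n '' Z ↔ (∀ i, w i ≠ 0) ∧ ∀ p ∈ Q, eval w p = 0 := fun w => by rw [hQE]; rfl
  obtain ⟨z, hz⟩ := hZne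
  -- an algebraic point of Z
  obtain ⟨z0, hz0alg, hz0P, _⟩ := qbar_point P hPalg 1 z ((hPZ' z).1 hz) (by simp)
  have hz0 : z0 ∈ Z := (hPZ' z0).2 hz0P
  -- an algebraic point of the image
  have hzE := (hQE' (expMap n z)).1 ⟨z, hz, rfl⟩
  obtain ⟨w, hwalg, hwQ, hw0⟩ := qbar_point Q hQalg (∏ i, X i) (expMap n z) hzE.2 (by
    simp only [map_prod, aeval_X]
    exact Finset.prod_ne_zero_iff.2 fun i _ => hzE.1 i)
  simp only [map_prod, aeval_X] at hw0
  obtain ⟨y, hy, hyw⟩ := (hQE' w).2 ⟨fun i => Finset.prod_ne_zero_iff.1 hw0 i (Finset.mem_univ i), hwQ⟩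
  -- the ideal of Z
  let I : Ideal (MvPolynomial (Fin n) ℂ) :=
    { carrier := {p | ∀ z ∈ Z, eval z p = 0}
      zero_mem' := fun z _ => map_zero _
      add_mem' := fun {p q} hp hq z hz => by rw [map_add, hp z hz, hq z hz, add_zero]
      smul_mem' := fun c p hp z hz => by rw [smul_eq_mul, map_mul, hp z hz, mul_zero] }
  have hImem : ∀ p, p ∈ I ↔ ∀ z ∈ Z, eval z p = 0 := fun p => Iff.rfl
  have hZI : ∀ z, z ∈ Z ↔ ∀ q ∈ I, eval z q = 0 := by
    intro z
    refine ⟨fun hz q hq => hq z hz, fun h => (hPZ' z).2 fun p hp => h p fun x hx => (hPZ' x).1 hx p hp⟩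
  have hI : ∀ p, (∀ z, (∀ q ∈ I, eval z q = 0) → eval z p = 0) → p ∈ I :=
    fun p h z hz => h z ((hZI z).1 hz)
  have hprime : I.IsPrime := by
    refine ⟨?_, ?_⟩
    · intro h
      have h1 : (1 : MvPolynomial (Fin n) ℂ) ∈ I := by rw [h]; trivial
      simpa using h1 z0 hz0
    · intro p q hpq
      have := hZirr.2 {z | eval z p = 0} {z | eval z q = 0} ⟨{p}, by simp⟩ ⟨{q}, by simp⟩ (by
        intro z hz
        have := hpq z hz
        rw [map_mul] at this
        exact mul_eq_zero.1 this)
      rcases this with h | h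
      · exact Or.inl fun z hz => h hz
      · exact Or.inr fun z hz => h hz
  let M : Set (Fin n → ℤ) := {m | ∀ z ∈ Z, ∑ i, (m i : ℂ) * z i = ∑ i, (m i : ℂ) * z0 i}
  -- rationality
  have hrat : ∀ m ∈ M, ∃ q : ℚ, ∑ i, (m i : ℂ) * z0 i = q := by
    intro m hm
    refine gelfond_schneider_special _ ?_ ?_
    · rw [← mem_algebraicClosure_iff]
      exact sum_mem fun i _ => mul_mem (intCast_mem _ _) (mem_algebraicClosure_iff.2 (hz0alg i))
    · rw [← hm y hy]
      have h1 : Complex.exp (2 * (Real.pi : ℂ) * Complex.I * ∑ i, (m i : ℂ) * y i) = ∏ i, w i ^ m i := by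
        rw [Finset.mul_sum, Complex.exp_sum]
        refine Finset.prod_congr rfl fun i _ => ?_
        rw [← hyw]
        simp only [expMap]
        rw [← Complex.exp_int_mul]
        congr 1
        ring
      rw [h1]
      rw [← mem_algebraicClosure_iff]
      exact prod_mem fun i _ => zpow_mem (mem_algebraicClosure_iff.2 (hwalg i)) (m i)
  obtain ⟨π, hπ⟩ := LinearMap.exists_leftInverse_of_injective (Algebra.linearMap ℚ ℂ)
    (LinearMap.ker_eq_bot.2 (algebraMap ℚ ℂ).injective)
  have hπ' : ∀ q : ℚ, π (q : ℂ) = q := fun q => by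
    have := LinearMap.congr_fun hπ q
    simpa using this
  let z1 : Fin n → ℂ := fun i => ((π (z0 i) : ℚ) : ℂ)
  have hz1 : ∀ m ∈ M, ∑ i, (m i : ℂ) * z1 i = ∑ i, (m i : ℂ) * z0 i := by
    intro m hm
    obtain ⟨q, hq⟩ := hrat m hm
    rw [hq, ← hπ' q, ← hq, map_sum]
    simp only [z1]
    push_cast
    refine Finset.sum_congr rfl fun i _ => ?_
    have : (m i : ℂ) * z0 i = (m i : ℚ) • z0 i := by rw [Rat.smul_def]; simp
    rw [this, map_smul]
    simp
  obtain ⟨k, a, haM, ha⟩ := exists_gens M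
  refine ⟨expMap n z1, {z | ∃ x : Fin k → ℂ, (∀ j, x j ≠ 0) ∧ ∀ l, z l = ∏ j, x j ^ a j l}, ?_,
    ⟨k, fun l j => a j l, rfl⟩, ?_⟩
  · intro i
    refine ⟨(π (z0 i)).den, (π (z0 i)).den_pos, ?_⟩
    simp only [expMap, z1]
    rw [← Complex.exp_nat_mul, Complex.exp_eq_one_iff]
    refine ⟨(π (z0 i)).num, ?_⟩
    have := congrArg (fun x : ℚ => (x : ℂ)) (Rat.mul_den_eq_num (π (z0 i)))
    simp only [Rat.cast_mul, Rat.cast_natCast, Rat.cast_intCast] at this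
    rw [← this]
    ring
  · have hexp : ∀ (t : Fin k → ℂ) l, Complex.exp (2 * (Real.pi : ℂ) * Complex.I * ∑ j, t j * (a j l : ℂ)) =
        ∏ j, Complex.exp (2 * (Real.pi : ℂ) * Complex.I * t j) ^ a j l := by
      intro t l
      rw [Finset.mul_sum, Complex.exp_sum]
      refine Finset.prod_congr rfl fun j _ => ?_
      rw [← Complex.exp_int_mul]
      congr 1
      ring
    apply Set.Subset.antisymm
    · rintro _ ⟨x, hx, rfl⟩
      obtain ⟨t, ht⟩ := ha (fun i => x i - z1 i) (by
        intro m hm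
        simp only [mul_sub, Finset.sum_sub_distrib]
        rw [hm x hx, hz1 m hm, sub_self])
      refine ⟨fun l => Complex.exp (2 * (Real.pi : ℂ) * Complex.I * ∑ j, t j * (a j l : ℂ)),
        ⟨fun j => Complex.exp (2 * (Real.pi : ℂ) * Complex.I * t j), fun j => Complex.exp_ne_zero _, hexp t⟩, ?_⟩
      funext l
      simp only [expMap]
      rw [← Complex.exp_add, ← ht l]
      congr 1
      ring
    · rintro _ ⟨u, ⟨x, hx, hxz⟩, rfl⟩
      have hlog : ∀ j, ∃ t, Complex.exp (2 * (Real.pi : ℂ) * Complex.I * t) = x j := by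
        intro j
        refine ⟨Complex.log (x j) / (2 * (Real.pi : ℂ) * Complex.I), ?_⟩
        rw [mul_div_cancel₀ _ Complex.two_pi_I_ne_zero, Complex.exp_log (hx j)]
      choose t ht using hlog
      have heq : (fun i => expMap n z1 i * u i) = expMap n (fun l => z1 l + ∑ j, t j * (a j l : ℂ)) := by
        funext l
        rw [hxz l]
        simp only [expMap]
        rw [mul_add, Complex.exp_add, hexp]
        simp only [ht]
      show (fun i => expMap n z1 i * u i) ∈ _
      rw [heq, hQE']
      refine ⟨fun i => Complex.exp_ne_zero _, fun g hg => ?_⟩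
      refine geom_zero I hprime hI Z hZI z0 hz0 g ?_ _ ?_
      · intro z hz
        exact ((hQE' _).1 ⟨z, hz, rfl⟩).2 g hg
      · intro m hm
        have h1 : ∑ i, (m i : ℂ) * ∑ j, t j * (a j i : ℂ) = 0 := by
          simp only [Finset.mul_sum]
          rw [Finset.sum_comm]
          refine Finset.sum_eq_zero fun j _ => ?_
          have h2 : ((∑ i, m i * a j i : ℤ) : ℂ) = 0 := by rw [haM m hm j]; simp
          push_cast at h2
          rw [← mul_zero (t j), ← h2, Finset.mul_sum]
          exact Finset.sum_congr rfl fun i _ => by ring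
        simp only [mul_add, Finset.sum_add_distrib, h1, add_zero]
        exact hz1 m hm
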